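/- arXiv:1907.05455 — 3 statements merged into one kernel-verified Lean document; each statement's English description precedes it below -/
import Mathlib

section
/- Let V ⊆ ℂ^N be a strictly convex domain and let U ⊆ ℂ^N be a domain intersecting bV. Then for every ε > 0 there exist finitely many pairwise disjoint closed caps Γ_1, …, Γ_n of V contained entirely in U ∩ cl(V) such that m((U ∩ bV) \ Γ) < ε, where Γ = Γ_1 ∪ ⋯ ∪ Γ_n and m is the (2N−1)-dimensional Hausdorff measure. Moreover, for any polynomially convex compact set K ⊆ V with Γ ∩ K = ∅, the set Γ ∪ K is polynomially convex. -/
open Set Filter Topology Metric MeasureTheory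
open scoped ENNReal NNReal InnerProductSpace ComplexConjugate

noncomputable section

/-- `ℂ^N` with the Euclidean structure. -/
abbrev EN (N : ℕ) := EuclideanSpace ℂ (Fin N)

instance {N : ℕ} : MeasurableSpace (EN N) := borel _
instance {N : ℕ} : BorelSpace (EN N) := ⟨rfl⟩

/-- A domain: a nonempty open connected subset. -/
def IsDomainSet {N : ℕ} (D : Set (EN N)) : Prop := IsOpen D ∧ IsConnected D

/-- `u` is plurisubharmonic on `D`: upper semicontinuous on `D`, and its restriction to
every complex affine line satisfies the sub-mean value inequality on every closed disc
(of that line) contained in `D`. -/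
def PlurisubharmonicOn {N : ℕ} (u : EN N → ℝ) (D : Set (EN N)) : Prop :=
  UpperSemicontinuousOn u D ∧
  ∀ (a b : EN N) (t₀ : ℂ) (r : ℝ), 0 < r →
    (fun t : ℂ => a + t • b) '' Metric.closedBall t₀ r ⊆ D →
    u (a + t₀ • b) ≤ (2 * Real.pi)⁻¹ *
      ∫ θ in (0:ℝ)..(2 * Real.pi), u (a + (t₀ + r * Complex.exp (θ * Complex.I)) • b)

/-- `D` is a pseudoconvex domain: a domain carrying a continuous plurisubharmonic
exhaustion function. -/
def Pseudoconvex {N : ℕ} (D : Set (EN N)) : Prop :=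
  IsDomainSet D ∧ ∃ u : EN N → ℝ, ContinuousOn u D ∧ PlurisubharmonicOn u D ∧
    ∀ c : ℝ, IsCompact (closure {z ∈ D | u z < c}) ∧ closure {z ∈ D | u z < c} ⊆ D

/-- The space `𝒪(D)` of holomorphic functions on `D`, as a submodule of `ℂ^N → ℂ`. -/
def Hol {N : ℕ} (D : Set (EN N)) : Submodule ℂ (EN N → ℂ) where
  carrier := {f | DifferentiableOn ℂ f D}
  add_mem' hf hg := hf.add hg
  zero_mem' := differentiableOn_const 0
  smul_mem' c f hf := hf.const_smul c

/-- The topology of uniform convergence on compact subsets of `D`, on `𝒪(D)`. -/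
instance holTopology {N : ℕ} (D : Set (EN N)) : TopologicalSpace ↥(Hol D) :=
  TopologicalSpace.induced
    (fun f => UniformOnFun.ofFun {K : Set (EN N) | K ⊆ D ∧ IsCompact K} f.1)
    inferInstance

/-- A set is residual if it contains a dense `G_δ` set. -/
def ResidualIn {X : Type*} [TopologicalSpace X] (S : Set X) : Prop :=
  ∃ T : Set X, T ⊆ S ∧ IsGδ T ∧ Dense T

/-- `S` is densely lineable: `S ∪ {0}` contains a dense vector subspace. -/
def DenselyLineableIn {X : Type*} [TopologicalSpace X] [AddCommMonoid X] [Module ℂ X]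
    (S : Set X) : Prop :=
  ∃ p : Submodule ℂ X, Dense (p : Set X) ∧ (p : Set X) ⊆ S ∪ {0}

/-- `S` is spaceable: `S ∪ {0}` contains a closed infinite-dimensional vector subspace. -/
def SpaceableIn {X : Type*} [TopologicalSpace X] [AddCommMonoid X] [Module ℂ X]
    (S : Set X) : Prop :=
  ∃ p : Submodule ℂ X, IsClosed (p : Set X) ∧ ¬ Module.Finite ℂ ↥p ∧ (p : Set X) ⊆ S ∪ {0}

/-- A finite length path to `bD`: continuous and piecewise `C¹` on `[0,1)`, with values in `D`,
finite length (total variation), converging to a boundary point of `D` as `r → 1`. -/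
def FiniteLengthPathTo {N : ℕ} (D : Set (EN N)) (γ : ℝ → EN N) : Prop :=
  MapsTo γ (Ico (0:ℝ) 1) D ∧ ContinuousOn γ (Ico (0:ℝ) 1) ∧
  (∃ u : ℕ → ℝ, u 0 = 0 ∧ StrictMono u ∧ (∀ n, u n < 1) ∧ Tendsto u atTop (𝓝 1) ∧
    ∀ n, ContDiffOn ℝ 1 γ (Icc (u n) (u (n+1)))) ∧
  eVariationOn γ (Ico (0:ℝ) 1) < ⊤ ∧
  ∃ ζ ∈ frontier D, Tendsto γ (𝓝[<] (1:ℝ)) (𝓝 ζ)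

/-- The set of `f ∈ 𝒪(D)` with maximal cluster set along every finite length path to `bD`. -/
def WildSet {N : ℕ} (D : Set (EN N)) : Set ↥(Hol D) :=
  {f | ∀ γ : ℝ → EN N, FiniteLengthPathTo D γ → ∀ c : ℂ,
    ∃ r : ℕ → ℝ, (∀ n, r n ∈ Ico (0:ℝ) 1) ∧ Tendsto r atTop (𝓝 1) ∧
      Tendsto (fun n => f.1 (γ (r n))) atTop (𝓝 c)}

/-- The `𝒪(D)`-hull of `K`. -/
def holHull {N : ℕ} (D K : Set (EN N)) : Set (EN N) :=
  {z ∈ D | ∀ φ : EN N → ℂ, DifferentiableOn ℂ φ D → ‖φ z‖ ≤ ⨆ w ∈ K, ‖φ w‖}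

/-- `K` is `𝒪(D)`-convex. -/
def HolConvexIn {N : ℕ} (D K : Set (EN N)) : Prop := K ⊆ D ∧ holHull D K = K

/-- The polynomial hull of a compact subset of `ℂ`. -/
def polyHull1 (E : Set ℂ) : Set ℂ :=
  {z | ∀ p : Polynomial ℂ, ‖p.eval z‖ ≤ ⨆ w ∈ E, ‖p.eval w‖}

/-- The polynomial hull of a subset of `ℂ^N`. -/
def polyHull {N : ℕ} (E : Set (EN N)) : Set (EN N) :=
  {z | ∀ p : MvPolynomial (Fin N) ℂ,
    ‖MvPolynomial.eval (fun j => z j) p‖ ≤ ⨆ w ∈ E, ‖MvPolynomial.eval (fun j => w j) p‖}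

/-- `E ⊆ ℂ^N` is polynomially convex. -/
def PolynomiallyConvex {N : ℕ} (E : Set (EN N)) : Prop := polyHull E = E

/-- The (real) Hessian of `ρ` at `p`, applied to the pair `(v, w)`. -/
def Hess {N : ℕ} (ρ : EN N → ℝ) (p v w : EN N) : ℝ :=
  fderiv ℝ (fderiv ℝ ρ) p v w

/-- The Levi form `∑_{j,k} ∂²ρ/∂z_j∂z̄_k (p) w_j w̄_k`, expressed through the real Hessian. -/
def LeviForm {N : ℕ} (ρ : EN N → ℝ) (p w : EN N) : ℝ :=
  (Hess ρ p w w + Hess ρ p (Complex.I • w) (Complex.I • w)) / 4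

/-- `w` belongs to the complex tangent space `{w : ∑_j ∂ρ/∂z_j(p) w_j = 0}` at `p`. -/
def ComplexTangent {N : ℕ} (ρ : EN N → ℝ) (p w : EN N) : Prop :=
  fderiv ℝ ρ p w = 0 ∧ fderiv ℝ ρ p (Complex.I • w) = 0

/-- `ρ` is a `C²` defining function for `D` on the open neighborhood `V` of `cl D`. -/
def IsDefiningFunctionOn {N : ℕ} (D : Set (EN N)) (ρ : EN N → ℝ) (V : Set (EN N)) : Prop :=
  IsOpen V ∧ closure D ⊆ V ∧ ContDiffOn ℝ 2 ρ V ∧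
  D = {z ∈ V | ρ z < 0} ∧ ∀ p ∈ frontier D, fderiv ℝ ρ p ≠ 0

/-- `D` is a strictly pseudoconvex domain with defining function `ρ`. -/
def StrictPSCWith {N : ℕ} (D : Set (EN N)) (ρ : EN N → ℝ) : Prop :=
  IsDomainSet D ∧ Bornology.IsBounded D ∧ (∃ V, IsDefiningFunctionOn D ρ V) ∧
  ∀ p ∈ frontier D, ∀ w : EN N, w ≠ 0 → ComplexTangent ρ p w → 0 < LeviForm ρ p w

/-- `D` is a strictly pseudoconvex domain. -/
def StrictlyPseudoconvex {N : ℕ} (D : Set (EN N)) : Prop := ∃ ρ, StrictPSCWith D ρ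

/-- `ρ` and `σ` are at `C²`-distance `< ε` on `V`. -/
def C2DistLt {N : ℕ} (V : Set (EN N)) (ρ σ : EN N → ℝ) (ε : ℝ) : Prop :=
  ∀ z ∈ V, |ρ z - σ z| + ‖fderiv ℝ ρ z - fderiv ℝ σ z‖ +
    ‖fderiv ℝ (fderiv ℝ ρ) z - fderiv ℝ (fderiv ℝ σ) z‖ < ε

/-- The standing assumptions on the map `γ : bD × [0,1] → cl D`: it is `C^k`, maps
`bD × [0,1)` into `D`, satisfies `γ(x,1) = x`, and the curves `r ↦ γ(x,r)` hit `bD`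
transversally at `x` (the `r`-derivative at `1` is not annihilated by `dρ(x)`,
i.e. it is not tangent to `bD` at `x`). -/
def GammaMap {N : ℕ} (D : Set (EN N)) (ρ : EN N → ℝ) (γ : EN N × ℝ → EN N) (k : ℕ) : Prop :=
  ContDiffOn ℝ k γ ((frontier D) ×ˢ Icc (0:ℝ) 1) ∧
  (∀ x ∈ frontier D, ∀ r ∈ Ico (0:ℝ) 1, γ (x, r) ∈ D) ∧
  (∀ x ∈ frontier D, γ (x, 1) = x) ∧
  ∀ x ∈ frontier D, fderiv ℝ ρ x (derivWithin (fun r => γ (x, r)) (Icc (0:ℝ) 1) 1) ≠ 0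

/-- Assumption (†): for all `r` close enough to `1`, `bD_r := γ(bD × {r})` bounds a strictly
pseudoconvex domain `D_r ⊆ D` whose defining function converges to `ρ` in `C²` norm on a
neighborhood `V` of `cl D` as `r → 1`. -/
def Dagger {N : ℕ} (D : Set (EN N)) (ρ : EN N → ℝ) (γ : EN N × ℝ → EN N) : Prop :=
  ∃ V : Set (EN N), IsOpen V ∧ closure D ⊆ V ∧
  ∃ (Dr : ℝ → Set (EN N)) (ρr : ℝ → EN N → ℝ),
    ∀ ε > 0, ∃ r₀ ∈ Ico (0:ℝ) 1, ∀ r ∈ Ioo r₀ 1,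
      StrictPSCWith (Dr r) (ρr r) ∧ Dr r ⊆ D ∧
      frontier (Dr r) = (fun x => γ (x, r)) '' frontier D ∧
      C2DistLt V (ρr r) ρ ε

/-- The `(2N-1)`-dimensional Hausdorff (surface) measure on `bD`. -/
def surfMeasure {N : ℕ} (D : Set (EN N)) : Measure (EN N) :=
  (Measure.hausdorffMeasure (2 * (N:ℝ) - 1)).restrict (frontier D)

/-- The normalized surface measure on `bD`. -/
def surfMeasureNorm {N : ℕ} (D : Set (EN N)) : Measure (EN N) :=
  ((Measure.hausdorffMeasure (2 * (N:ℝ) - 1) : Measure (EN N)) (frontier D))⁻¹ • surfMeasure D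

/-- The set `𝒲((r_j))` of `f ∈ 𝒪(D)` such that every measurable function on `bD` is an
a.e. limit of `f ∘ γ(·, r_{j_k})` along some subsequence of `(r_j)`. -/
def WSet {N : ℕ} (D : Set (EN N)) (γ : EN N × ℝ → EN N) (r : ℕ → ℝ) : Set ↥(Hol D) :=
  {f | ∀ h : EN N → ℂ, Measurable h → ∃ φ : ℕ → ℕ, StrictMono φ ∧
    ∀ᵐ x ∂ surfMeasure D, Tendsto (fun k => f.1 (γ (x, r (φ k)))) atTop (𝓝 (h x))}

/-- `Γ` is a closed cap of a convex set `V`: the closure of a connected component of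
`V \ H` for some real affine hyperplane `H` (for convex `V`, a nonempty open half-space
slice of `V`). -/
def IsClosedCap {N : ℕ} (V : Set (EN N)) (Γ : Set (EN N)) : Prop :=
  ∃ (l : EN N →L[ℝ] ℝ) (c : ℝ), l ≠ 0 ∧ (V ∩ {z | c < l z}).Nonempty ∧
    Γ = closure (V ∩ {z | c < l z})

/-- `V` is a strictly convex domain: a bounded convex domain with `C²` boundary whose
defining function has positive definite real Hessian on the real tangent space. -/
def StrictlyConvexDomain {N : ℕ} (V : Set (EN N)) : Prop :=
  IsDomainSet V ∧ Bornology.IsBounded V ∧ Convex ℝ V ∧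
  ∃ (ρ : EN N → ℝ) (W : Set (EN N)), IsDefiningFunctionOn V ρ W ∧
    ∀ p ∈ frontier V, ∀ w : EN N, w ≠ 0 → fderiv ℝ ρ p w = 0 → 0 < Hess ρ p w w

/-- The defining function `‖z‖² - 1` of the unit ball. -/
def ballRho {N : ℕ} : EN N → ℝ := fun z => ‖z‖ ^ 2 - 1

/-- The normalized surface measure on the unit sphere of `ℂ^N`. -/
def sphMeasure (N : ℕ) : Measure (EN N) :=
  ((Measure.hausdorffMeasure (2 * (N:ℝ) - 1) : Measure (EN N)) (Metric.sphere 0 1))⁻¹ •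
    (Measure.hausdorffMeasure (2 * (N:ℝ) - 1)).restrict (Metric.sphere 0 1)

/-- `v` is a weight: increasing on `[0,∞)`, nonnegative, and tending to `∞`. -/
def IsWeight (v : ℝ → ℝ) : Prop :=
  (∀ x ∈ Ici (0:ℝ), 0 ≤ v x) ∧ MonotoneOn v (Ici 0) ∧ Tendsto v atTop atTop

/-- The norm `‖f‖ = sup_{z ∈ 𝔹_N} |f z| / v(|z|)` of `H_v^0`. -/
def hvNorm {N : ℕ} (v : ℝ → ℝ) (f : EN N → ℂ) : ℝ :=
  ⨆ z ∈ Metric.ball (0:EN N) 1, ‖f z‖ / v ‖z‖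

/-- Membership in `H_v^0`: `f` is holomorphic on `𝔹_N` and `sup_{|z|=r} |f z| / v(r) → 0`
as `r → 1⁻`. -/
def MemHv {N : ℕ} (v : ℝ → ℝ) (f : EN N → ℂ) : Prop :=
  DifferentiableOn ℂ f (Metric.ball 0 1) ∧
  Tendsto (fun r : ℝ => ⨆ z ∈ Metric.sphere (0:EN N) r, ‖f z‖ / v r) (𝓝[<] 1) (𝓝 0)

/-- `S` contains, relatively to `H_v^0` with its norm topology, a dense `G_δ` subset:
there are countably many relatively norm-open sets `U n` whose intersection with `H_v^0`
is norm-dense in `H_v^0` and contained in `S`. -/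
def ResidualInHv {N : ℕ} (v : ℝ → ℝ) (S : Set (EN N → ℂ)) : Prop :=
  ∃ U : ℕ → Set (EN N → ℂ),
    (∀ n, ∀ f, MemHv v f → f ∈ U n →
      ∃ δ > 0, ∀ g, MemHv v g → hvNorm v (g - f) < δ → g ∈ U n) ∧
    (∀ f, MemHv v f → ∀ δ > 0, ∃ g, MemHv v g ∧ (∀ n, g ∈ U n) ∧ hvNorm v (g - f) < δ) ∧
    ∀ f, MemHv v f → (∀ n, f ∈ U n) → f ∈ S

/-- `S` is densely lineable in `H_v^0`: `S ∪ {0}` contains a norm-dense subspace of `H_v^0`. -/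
def DenselyLineableInHv {N : ℕ} (v : ℝ → ℝ) (S : Set (EN N → ℂ)) : Prop :=
  ∃ p : Submodule ℂ (EN N → ℂ), (↑p ⊆ {f : EN N → ℂ | MemHv v f}) ∧ (↑p ⊆ S ∪ {0}) ∧
    ∀ f, MemHv v f → ∀ δ > 0, ∃ g ∈ p, hvNorm v (g - f) < δ

/-- `S` is spaceable in `H_v^0`: `S ∪ {0}` contains a norm-closed infinite-dimensional
subspace of `H_v^0`. -/
def SpaceableInHv {N : ℕ} (v : ℝ → ℝ) (S : Set (EN N → ℂ)) : Prop :=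
  ∃ p : Submodule ℂ (EN N → ℂ), (↑p ⊆ {f : EN N → ℂ | MemHv v f}) ∧ (↑p ⊆ S ∪ {0}) ∧
    ¬ Module.Finite ℂ ↥p ∧
    ∀ f, MemHv v f → (∀ δ > 0, ∃ g ∈ p, hvNorm v (g - f) < δ) → f ∈ p

/-- The standing assumptions on the family `{γ_z : z ∈ 𝔹_N}`: each `γ_z` is a `C¹` map
`b𝔹_N × [0,1] → cl 𝔹_N` into `𝔹_N` for `r < 1` with `γ_z(x,1) = x`, transversal approach
and (†), with joint continuity of `(z,x,r) ↦ γ_z(x,r)` and of `(z,r) ↦ ∂γ_z(x,r)/∂r`. -/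
def BallGammaFamily {N : ℕ} (γ : EN N → EN N × ℝ → EN N) : Prop :=
  (∀ z ∈ Metric.ball (0:EN N) 1,
    GammaMap (Metric.ball 0 1) ballRho (γ z) 1 ∧ Dagger (Metric.ball 0 1) ballRho (γ z)) ∧
  ContinuousOn (fun p : EN N × (EN N × ℝ) => γ p.1 p.2)
    (Metric.ball 0 1 ×ˢ (Metric.sphere 0 1 ×ˢ Icc (0:ℝ) 1)) ∧
  ∀ x ∈ Metric.sphere (0:EN N) 1,
    ContinuousOn (fun p : EN N × ℝ => derivWithin (fun r => γ p.1 (x, r)) (Icc (0:ℝ) 1) p.2)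
      (Metric.ball 0 1 ×ˢ Icc (0:ℝ) 1)

/-- The set of `f` such that for every `z ∈ 𝔹_N`, every measurable function on `b𝔹_N` is an
a.e. limit of `f ∘ γ_z(·, r_{j_k})` along some subsequence of `(r_j)`. -/
def WSetHv {N : ℕ} (γ : EN N → EN N × ℝ → EN N) (r : ℕ → ℝ) : Set (EN N → ℂ) :=
  {f | ∀ z ∈ Metric.ball (0:EN N) 1, ∀ h : EN N → ℂ, Measurable h →
    ∃ φ : ℕ → ℕ, StrictMono φ ∧
      ∀ᵐ x ∂ sphMeasure N, Tendsto (fun k => f (γ z (x, r (φ k)))) atTop (𝓝 (h x))}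

/-- The set `E_L^* = {γ_z(x,r) : x ∈ E, r ∈ [0,1], z ∈ L}`. -/
def EStarSet {N : ℕ} (γ : EN N → EN N × ℝ → EN N) (L E : Set (EN N)) : Set (EN N) :=
  {w | ∃ z ∈ L, ∃ x ∈ E, ∃ r ∈ Icc (0:ℝ) 1, w = γ z (x, r)}

/-- The Korányi approach region `D_α(x)`. -/
def Koranyi {N : ℕ} (α : ℝ) (x : EN N) : Set (EN N) :=
  {z ∈ Metric.ball (0:EN N) 1 | ‖1 - (⟪x, z⟫_ℂ : ℂ)‖ < α / 2 * (1 - ‖z‖ ^ 2)}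

/-- `h` has a `K`-limit at `x`: for every `α > 1` the values of `h` converge along every
sequence in `D_α(x)` converging to `x`. -/
def HasKLimitAt {N : ℕ} (h : EN N → ℂ) (x : EN N) : Prop :=
  ∀ α > (1:ℝ), ∃ c : ℂ, ∀ z : ℕ → EN N, (∀ i, z i ∈ Koranyi α x) →
    Tendsto z atTop (𝓝 x) → Tendsto (fun i => h (z i)) atTop (𝓝 c)

/-- The circle `bL_x = L_x ∩ b𝔹_N` cut out on the complex line through `x` and `0`. -/
def lineCircle {N : ℕ} (x : EN N) : Set (EN N) :=
  {z | ∃ t : ℂ, z = t • x} ∩ Metric.sphere 0 1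

end

open Set Filter Topology Metric MeasureTheory

lemma spec_strip (S : Set ℂ) (a : ℝ) (ha : ∀ z ∈ S, z.re ≠ a) [CompactSpace S]
    (x : (polynomialFunctions S).topologicalClosure)
    (hx : (x : C(S, ℂ)) = Polynomial.toContinuousMapOnAlgHom S Polynomial.X) :
    ∀ l ∈ spectrum ℂ x, l.re ≠ a := by
  intro l hl hla
  have : CompleteSpace (polynomialFunctions S).topologicalClosure :=
    (Subalgebra.isClosed_topologicalClosure _).completeSpace_coe
  have hcomp : IsCompact (spectrum ℂ x) := spectrum.isCompact x
  have hT : IsCompact (spectrum ℂ x ∩ {z | z.re = a}) :=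
    hcomp.inter_right (isClosed_eq Complex.continuous_re continuous_const)
  obtain ⟨m, ⟨hm, hma⟩, hmax⟩ := hT.exists_isMaxOn ⟨l, hl, hla⟩ Complex.continuous_im.continuousOn
  have hfr : m ∈ frontier (spectrum ℂ x) := by
    rw [hcomp.isClosed.frontier_eq]
    refine ⟨hm, fun hmint => ?_⟩
    have hmem := mem_interior_iff_mem_nhds.1 hmint
    obtain ⟨e, he, hsub⟩ := Metric.mem_nhds_iff.1 hmem
    have h1 : m + ((e/2 : ℝ) : ℂ) * Complex.I ∈ spectrum ℂ x := by
      apply hsub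
      simp [abs_of_pos he, he]
    have h2 := hmax ⟨h1, by simpa using hma⟩
    simp at h2
    linarith
  have : IsClosed ((polynomialFunctions S).topologicalClosure : Set C(S, ℂ)) :=
    Subalgebra.isClosed_topologicalClosure _
  have h3 := Subalgebra.frontier_spectrum _ x hfr
  rw [hx, ContinuousMap.spectrum_eq_range] at h3
  obtain ⟨w, hw⟩ := h3
  simp at hw
  exact ha w w.2 (by rw [hw]; exact hma)

lemma exists_fermi {B : Type*} [NormedCommRing B] [NormedAlgebra ℂ B] [CompleteSpace B]
    (x : B) (a : ℝ) (k : ℕ) (hk : k ≠ 0) (h : ∀ l ∈ spectrum ℂ x, l.re ≠ a) :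
    ∃ e : B, ∀ χ : B →ₐ[ℂ] ℂ, Continuous χ →
      χ e * (1 + Complex.exp (-(k:ℂ) * (χ x - a))) = 1 := by
  let _ : NormedAlgebra ℚ B := NormedAlgebra.restrictScalars ℚ ℂ B
  have key : ∀ χ : B →ₐ[ℂ] ℂ, Continuous χ →
      χ (NormedSpace.exp ((-(k:ℂ)) • (x - algebraMap ℂ B (a:ℂ))))
      = Complex.exp (-(k:ℂ) * (χ x - a)) := by
    intro χ hc
    have := NormedSpace.map_exp χ hc ((-(k:ℂ)) • (x - algebraMap ℂ B (a:ℂ)))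
    rw [this, ← Complex.exp_eq_exp_ℂ]
    congr 1
    rw [map_smul, map_sub, AlgHomClass.commutes]
    simp
  have hu : IsUnit (1 + NormedSpace.exp ((-(k:ℂ)) • (x - algebraMap ℂ B (a:ℂ)))) := by
    by_contra h'
    have h0 : (0:ℂ) ∈ spectrum ℂ (1 + NormedSpace.exp ((-(k:ℂ)) • (x - algebraMap ℂ B (a:ℂ)))) := by
      rw [spectrum.zero_mem_iff]; exact h'
    rw [WeakDual.CharacterSpace.mem_spectrum_iff_exists] at h0
    obtain ⟨χ, hχ⟩ := h0
    have hχx : χ x ∈ spectrum ℂ x :=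
      WeakDual.CharacterSpace.mem_spectrum_iff_exists.2 ⟨χ, rfl⟩
    have h1 := key (WeakDual.CharacterSpace.toAlgHom χ) (map_continuous χ)
    change χ _ = Complex.exp (-(k:ℂ) * (χ x - a)) at h1
    rw [map_add, map_one, h1] at hχ
    have h2 : ‖Complex.exp (-(k:ℂ) * (χ x - a))‖ = 1 := by
      rw [eq_neg_of_add_eq_zero_right hχ]; simp
    rw [Complex.norm_exp, Real.exp_eq_one_iff] at h2
    simp [hk] at h2
    exact h _ hχx (by linarith)
  obtain ⟨u, hu⟩ := hu
  refine ⟨↑u⁻¹, fun χ hc => ?_⟩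
  rw [← key χ hc, ← map_one χ, ← map_add, ← hu, ← map_mul, Units.inv_mul]

lemma runge_sep (S : Set ℂ) (hS : IsCompact S) (a : ℝ) (ha : ∀ z ∈ S, z.re ≠ a)
    (η : ℝ) (hη : 0 < η) : ∃ q : Polynomial ℂ, ∀ z ∈ S,
      (a < z.re → ‖q.eval z - 1‖ ≤ η) ∧ (z.re < a → ‖q.eval z‖ ≤ η) := by
  rcases S.eq_empty_or_nonempty with rfl | hne
  · exact ⟨0, by simp⟩
  have : CompactSpace S := isCompact_iff_compactSpace.1 hS
  have : Nonempty S := hne.to_subtype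
  have : CompleteSpace (polynomialFunctions S).topologicalClosure :=
    (Subalgebra.isClosed_topologicalClosure _).completeSpace_coe
  let X0 : C(S, ℂ) := Polynomial.toContinuousMapOnAlgHom S Polynomial.X
  let x : (polynomialFunctions S).topologicalClosure :=
    ⟨X0, Subalgebra.le_topologicalClosure _ (by
      rw [← SetLike.mem_coe, polynomialFunctions_coe]; exact ⟨_, rfl⟩)⟩
  have hspec := spec_strip S a ha x rfl
  -- gap
  obtain ⟨δ, hδ, hgap⟩ : ∃ δ > 0, ∀ z ∈ S, δ ≤ |z.re - a| := by
    obtain ⟨m, hm, hmin⟩ := hS.exists_isMinOn hne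
      (f := fun z : ℂ => |z.re - a|) (by fun_prop)
    exact ⟨_, abs_pos.2 (sub_ne_zero.2 (ha m hm)), fun z hz => hmin hz⟩
  -- pick k
  obtain ⟨k, hk0, hk⟩ : ∃ k : ℕ, k ≠ 0 ∧ 1 + 2 / η ≤ Real.exp (k * δ) := by
    have : Tendsto (fun k : ℕ => Real.exp (k * δ)) atTop atTop :=
      Real.tendsto_exp_atTop.comp (tendsto_natCast_atTop_atTop.atTop_mul_const hδ)
    exact ((eventually_ne_atTop 0).and (this.eventually_ge_atTop _)).exists
  obtain ⟨e, he⟩ := exists_fermi x a k hk0 hspec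
  have he' : ∀ z (hz : z ∈ S), (e : C(S, ℂ)) ⟨z, hz⟩ *
      (1 + Complex.exp (-(k:ℂ) * (z - a))) = 1 := by
    intro z hz
    have := he ((ContinuousMap.evalAlgHom ℂ ℂ (⟨z, hz⟩ : S)).comp (Subalgebra.val _))
      ((continuous_eval_const (F := C(S, ℂ)) (⟨z, hz⟩ : S)).comp continuous_subtype_val)
    simpa [x, X0] using this
  obtain ⟨f, hf, hfe⟩ := Metric.mem_closure_iff.1
    (show (e : C(S, ℂ)) ∈ closure (polynomialFunctions S : Set C(S, ℂ)) from e.2) (η/2) (by positivity)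
  rw [polynomialFunctions_coe] at hf
  obtain ⟨q, rfl⟩ := hf
  refine ⟨q, fun z hz => ?_⟩
  have h1 : ‖(e : C(S, ℂ)) ⟨z, hz⟩ - q.eval z‖ ≤ η/2 := by
    have := (ContinuousMap.dist_apply_le_dist (f := (e : C(S, ℂ)))
      (g := Polynomial.toContinuousMapOnAlgHom S q) ⟨z, hz⟩).trans hfe.le
    simpa [dist_eq_norm] using this
  have h2 := he' z hz
  set E := (e : C(S, ℂ)) ⟨z, hz⟩
  set v := Complex.exp (-(k:ℂ) * (z - a)) with hv
  have hvn : ‖v‖ = Real.exp (-(k * (z.re - a))) := by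
    rw [hv, Complex.norm_exp]; simp
  have hgz := hgap z hz
  have hbig : 2 / η ≤ Real.exp (k*δ) - 1 := by linarith
  have h2η : 0 < 2 / η := by positivity
  constructor
  · intro hlt
    rw [abs_of_pos (by linarith)] at hgz
    -- exp(kδ) * |v| ≤ 1
    have h3 : Real.exp (k*δ) * ‖v‖ ≤ 1 := by
      rw [hvn, ← Real.exp_add, Real.exp_le_one_iff]
      have : (k:ℝ) * δ ≤ k * (z.re - a) := by gcongr
      linarith
    have h4 : 1 - E = E * v := by linear_combination -h2
    have h5 : ‖E‖ * (1 - ‖v‖) ≤ 1 := by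
      have : ‖E‖ * ‖1 + v‖ = 1 := by rw [← norm_mul, h2, norm_one]
      have h6 : 1 - ‖v‖ ≤ ‖1 + v‖ := by
        have := norm_sub_le (1 + v) v
        simp at this; linarith
      nlinarith [norm_nonneg E]
    have h7 : ‖E - 1‖ ≤ η/2 := by
      rw [← norm_neg, neg_sub, h4, norm_mul]
      have hexp : 1 < Real.exp (k*δ) := by linarith
      have h8 : (2/η) * ‖v‖ ≤ 1 - ‖v‖ := by nlinarith [norm_nonneg v]
      have h9 : (2/η) * (‖E‖ * ‖v‖) ≤ 1 := by nlinarith [norm_nonneg E]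
      calc ‖E‖ * ‖v‖ = (η/2) * ((2/η) * (‖E‖ * ‖v‖)) := by field_simp
        _ ≤ (η/2) * 1 := by gcongr
        _ = η/2 := by ring
    calc ‖q.eval z - 1‖ = ‖(E - 1) - (E - q.eval z)‖ := by congr 1; ring
      _ ≤ _ := norm_sub_le _ _
      _ ≤ η := by linarith
  · intro hlt
    rw [abs_of_neg (by linarith)] at hgz
    have h3 : Real.exp (k*δ) ≤ ‖v‖ := by
      rw [hvn, Real.exp_le_exp]
      have : (k:ℝ) * δ ≤ k * (-(z.re - a)) := by gcongr
      linarith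
    have h5 : ‖E‖ * (2/η) ≤ 1 := by
      have : ‖E‖ * ‖1 + v‖ = 1 := by rw [← norm_mul, h2, norm_one]
      have h6 : ‖v‖ - 1 ≤ ‖1 + v‖ := by
        have := norm_sub_le (1 + v) 1
        simp at this; linarith
      nlinarith [norm_nonneg E]
    have h7 : ‖E‖ ≤ η/2 := by
      calc ‖E‖ = (η/2) * (‖E‖ * (2/η)) := by field_simp
        _ ≤ (η/2) * 1 := by gcongr
        _ = η/2 := by ring
    calc ‖q.eval z‖ = ‖E - (E - q.eval z)‖ := by congr 1; ring
      _ ≤ _ := norm_sub_le _ _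
      _ ≤ η := by linarith

open Set Filter Topology Metric MeasureTheory
open scoped ENNReal NNReal InnerProductSpace ComplexConjugate

lemma continuous_evalP {N : ℕ} (p : MvPolynomial (Fin N) ℂ) :
    Continuous (fun z : EN N => MvPolynomial.eval (fun j => z j) p) := by
  have := MvPolynomial.continuous_eval p
  exact this.comp (by fun_prop)

lemma mem_polyHull_iff' {N : ℕ} {E : Set (EN N)} (hE : IsCompact E) (z : EN N) :
    z ∈ polyHull E ↔ ∀ (p : MvPolynomial (Fin N) ℂ) (M : ℝ), 0 ≤ M →
      (∀ w ∈ E, ‖MvPolynomial.eval (fun j => w j) p‖ ≤ M) →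
      ‖MvPolynomial.eval (fun j => z j) p‖ ≤ M := by
  constructor
  · intro h p M hM hb
    exact (h p).trans (Real.iSup_le (fun w => Real.iSup_le (fun hw => hb w hw) hM) hM)
  · intro h p
    obtain ⟨M, hM⟩ := hE.exists_bound_of_continuousOn (continuous_evalP p).continuousOn
    refine h p _ (Real.iSup_nonneg fun w => Real.iSup_nonneg fun _ => norm_nonneg _) ?_
    intro w hw
    have hbdd : BddAbove (range fun w : EN N =>
        ⨆ (_ : w ∈ E), ‖MvPolynomial.eval (fun j => w j) p‖) := by
      refine ⟨max M 0, ?_⟩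
      rintro _ ⟨w, rfl⟩
      exact Real.iSup_le (fun hw => (hM w hw).trans (le_max_left _ _)) (le_max_right _ _)
    refine le_trans ?_ (le_ciSup hbdd w)
    simp [hw]

lemma subset_polyHull' {N : ℕ} {E : Set (EN N)} (hE : IsCompact E) : E ⊆ polyHull E := by
  intro z hz
  rw [mem_polyHull_iff' hE]
  intro p M _ h
  exact h z hz

/-- A complex linear functional as a polynomial. -/
lemma exists_poly_of_functional {N : ℕ} (L : EN N →L[ℂ] ℂ) :
    ∃ p : MvPolynomial (Fin N) ℂ, ∀ z : EN N, MvPolynomial.eval (fun j => z j) p = L z := by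
  refine ⟨∑ j, MvPolynomial.C (L (EuclideanSpace.single j 1)) * MvPolynomial.X j, fun z => ?_⟩
  have hz : z = ∑ j, z j • (EuclideanSpace.single j (1:ℂ) : EN N) := by
    ext i
    simp [Pi.single_apply]
  conv_rhs => rw [hz]
  rw [map_sum, map_sum]
  simp [mul_comm]

lemma exists_complexify {N : ℕ} (l : EN N →L[ℝ] ℝ) :
    ∃ L : EN N →L[ℂ] ℂ, ∀ z, (L z).re = l z :=
  ⟨StrongDual.extendRCLikeₗ (𝕜 := ℂ) l, fun z => by exact StrongDual.re_extendRCLike_apply (𝕜 := ℂ) l z⟩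

lemma polyHull_convex {N : ℕ} {E : Set (EN N)} (hE : IsCompact E) (hc : Convex ℝ E) :
    polyHull E ⊆ E := by
  intro z hz
  by_contra hzE
  obtain ⟨l, u, h1, h2⟩ := geometric_hahn_banach_closed_point hc hE.isClosed hzE
  obtain ⟨L, hL⟩ := exists_complexify l
  obtain ⟨p, hp⟩ := exists_poly_of_functional L
  rw [mem_polyHull_iff' hE] at hz
  obtain ⟨M, hM⟩ := hE.exists_bound_of_continuousOn L.continuous.continuousOn
  -- disc of center u - R
  set δ := l z - u with hδ
  have hδ0 : 0 < δ := by linarith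
  -- center b = u - R, radius bound R + δ/2
  obtain ⟨R, hR0, hR⟩ : ∃ R : ℝ, M + |u| ≤ R ∧ 0 ≤ R ∧ (M ^ 2 ≤ R * δ) := by
    refine ⟨max (M + |u|) (max 0 (M^2/δ)), le_max_left _ _, ?_, ?_⟩
    · exact le_trans (le_max_left _ _) (le_max_right _ _)
    · rw [← div_le_iff₀ hδ0]
      exact le_trans (le_max_right _ _) (le_max_right _ _)
  have := hz (p - MvPolynomial.C ((u - R : ℝ) : ℂ)) (R + δ/2) (by linarith) ?_
  · simp only [map_sub, MvPolynomial.eval_C, hp] at this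
    have h3 := Complex.re_le_norm (L z - ((u - R : ℝ) : ℂ))
    simp [hL] at h3
    simp at this
    linarith
  · intro w hw
    simp only [map_sub, MvPolynomial.eval_C, hp]
    have h4 := h1 w hw
    have h5 := hM w hw
    rw [Complex.norm_def]
    apply Real.sqrt_le_iff.2 ⟨by linarith, ?_⟩
    rw [Complex.normSq_apply]
    simp [hL]
    have h6 := Complex.abs_im_le_norm (L w)
    have h7 := Complex.abs_re_le_norm (L w)
    rw [hL] at h7
    have h8 : (L w).im ^ 2 ≤ M ^ 2 := by
      rw [← sq_abs]; gcongr; linarith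
    have h9 : 0 ≤ l w - (u - R) := by
      have := neg_abs_le (l w); have := le_abs_self u; linarith
    nlinarith

/-- Kallin type lemma for half-space separated sets. -/
lemma polyHull_union {N : ℕ} {X Y : Set (EN N)} (hX : IsCompact X) (hY : IsCompact Y)
    (l : EN N →L[ℝ] ℝ) (c : ℝ) (h1 : ∀ z ∈ X, c ≤ l z) (h2 : ∀ z ∈ Y, l z < c) :
    polyHull (X ∪ Y) ⊆ polyHull X ∪ polyHull Y := by
  intro z hz
  by_contra hcon
  simp only [mem_union, not_or] at hcon
  obtain ⟨hzX, hzY⟩ := hcon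
  rw [mem_polyHull_iff' hX] at hzX
  rw [mem_polyHull_iff' hY] at hzY
  rw [mem_polyHull_iff' (hX.union hY)] at hz
  -- normalise
  have norm : ∀ (E : Set (EN N)), (¬ ∀ (p : MvPolynomial (Fin N) ℂ) (M : ℝ), 0 ≤ M →
      (∀ w ∈ E, ‖MvPolynomial.eval (fun j => w j) p‖ ≤ M) →
      ‖MvPolynomial.eval (fun j => z j) p‖ ≤ M) → ∃ p : MvPolynomial (Fin N) ℂ, ∃ r : ℝ,
      0 ≤ r ∧ r < 1 ∧ MvPolynomial.eval (fun j => z j) p = 1 ∧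
      ∀ w ∈ E, ‖MvPolynomial.eval (fun j => w j) p‖ ≤ r := by
    intro E h
    push Not at h
    obtain ⟨p, M, hM, hb, hlt⟩ := h
    set A := MvPolynomial.eval (fun j => z j) p with hA
    have hA0 : 0 < ‖A‖ := lt_of_le_of_lt hM hlt
    refine ⟨MvPolynomial.C A⁻¹ * p, M / ‖A‖, by positivity, (div_lt_one hA0).2 hlt, ?_, ?_⟩
    · simp only [map_mul, MvPolynomial.eval_C, ← hA]
      exact inv_mul_cancel₀ (norm_pos_iff.1 hA0)
    · intro w hw
      simp only [map_mul, MvPolynomial.eval_C, norm_mul, norm_inv]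
      rw [div_eq_inv_mul]
      gcongr
      exact hb w hw
  obtain ⟨p1, r1, hr1, hr1', hp1, hb1⟩ := norm X hzX
  obtain ⟨p2, r2, hr2, hr2', hp2, hb2⟩ := norm Y hzY
  obtain ⟨m, hm1, hm2⟩ : ∃ m : ℕ, r1 ^ m < 1/8 ∧ r2 ^ m < 1/8 := by
    have t1 := tendsto_pow_atTop_nhds_zero_of_lt_one hr1 hr1'
    have t2 := tendsto_pow_atTop_nhds_zero_of_lt_one hr2 hr2'
    exact ((t1.eventually_lt_const (by norm_num)).and
      (t2.eventually_lt_const (by norm_num))).exists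
  obtain ⟨B1, hB1⟩ := (hX.union hY).exists_bound_of_continuousOn
    ((continuous_evalP p1).pow m).continuousOn
  obtain ⟨B2, hB2⟩ := (hX.union hY).exists_bound_of_continuousOn
    ((continuous_evalP p2).pow m).continuousOn
  set B := max 1 (max B1 B2) with hB
  have hBpos : 1 ≤ B := le_max_left _ _
  have hBB1 : B1 ≤ B := (le_max_left _ _).trans (le_max_right _ _)
  have hBB2 : B2 ≤ B := (le_max_right _ _).trans (le_max_right _ _)
  obtain ⟨L, hL⟩ := exists_complexify l
  obtain ⟨pL, hpL⟩ := exists_poly_of_functional L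
  -- separation
  obtain ⟨a, hac, ha⟩ : ∃ a < c, ∀ w ∈ Y, l w < a := by
    rcases Y.eq_empty_or_nonempty with rfl | hne
    · exact ⟨c - 1, by linarith, by simp⟩
    · obtain ⟨m, hm, hmax⟩ := hY.exists_isMaxOn hne l.continuous.continuousOn
      refine ⟨(l m + c)/2, by linarith [h2 m hm], fun w hw => ?_⟩
      have : l w ≤ l m := hmax hw
      linarith [h2 m hm]
  have hη : 0 < 1 / (8 * B) := by positivity
  obtain ⟨q, hq⟩ := runge_sep (L '' (X ∪ Y)) ((hX.union hY).image L.continuous) a (by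
    rintro _ ⟨w, hw, rfl⟩
    rw [hL]
    rcases hw with hw | hw
    · exact (lt_of_lt_of_le hac (h1 w hw)).ne'
    · exact (ha w hw).ne) (1 / (8 * B)) hη
  let Q : MvPolynomial (Fin N) ℂ := Polynomial.aeval pL q
  have hQ : ∀ w : EN N, MvPolynomial.eval (fun j => w j) Q = q.eval (L w) := by
    intro w
    rw [← hpL w]
    simp only [Q, Polynomial.aeval_def, Polynomial.hom_eval₂]
    rw [Polynomial.eval]
    congr 1
    ext c <;> simp
  have hηB : 1 / (8 * B) * B = 1/8 := by field_simp
  have hη1 : 1 / (8 * B) ≤ 1/8 := by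
    apply one_div_le_one_div_of_le <;> linarith
  have hfin := hz (Q * p1 ^ m + (1 - Q) * p2 ^ m) (1/2) (by norm_num) ?_
  · simp [hp1, hp2] at hfin
    norm_num at hfin
  · intro w hw
    have e1 := hB1 w hw
    have e2 := hB2 w hw
    simp only [map_add, map_mul, map_sub, map_one, map_pow, hQ]
    set P1 := MvPolynomial.eval (fun j => w j) p1 
    set P2 := MvPolynomial.eval (fun j => w j) p2
    have hqw := hq (L w) ⟨w, hw, rfl⟩
    rw [hL] at hqw
    set T := q.eval (L w)
    refine (norm_add_le _ _).trans ?_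
    rw [norm_mul, norm_mul]
    have hsw : ‖1 - T‖ = ‖T - 1‖ := norm_sub_rev _ _
    rcases hw with hw | hw
    · have q1 := hqw.1 (lt_of_lt_of_le hac (h1 w hw))
      have q2 : ‖T‖ ≤ 9/8 := by
        have := norm_add_le (T - 1) 1
        simp at this; linarith
      have q3 : ‖P1 ^ m‖ ≤ 1/8 := by
        rw [norm_pow]
        exact (pow_le_pow_left₀ (norm_nonneg _) (hb1 w hw) m).trans hm1.le
      calc _ ≤ 9/8 * (1/8) + 1 / (8 * B) * B := by
            gcongr
            · rw [hsw]; exact q1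
            · exact e2.trans hBB2
        _ ≤ _ := by rw [hηB]; norm_num
    · have q1 := hqw.2 (ha w hw)
      have q2 : ‖1 - T‖ ≤ 9/8 := by
        have := norm_sub_le 1 T
        simp at this; linarith
      have q3 : ‖P2 ^ m‖ ≤ 1/8 := by
        rw [norm_pow]
        exact (pow_le_pow_left₀ (norm_nonneg _) (hb2 w hw) m).trans hm2.le
      calc _ ≤ 1 / (8 * B) * B + 9/8 * (1/8) := by
            gcongr
            exact e1.trans hBB1
        _ ≤ _ := by rw [hηB]; norm_num

lemma closedCap_props {N : ℕ} {V Γ : Set (EN N)} (hVo : IsOpen V) (hVc : Convex ℝ V)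
    (hVb : Bornology.IsBounded V) (h : IsClosedCap V Γ) :
    IsCompact Γ ∧ Convex ℝ Γ ∧ ∃ (l : EN N →L[ℝ] ℝ) (c : ℝ), (∀ z ∈ Γ, c ≤ l z) ∧
      ∀ z ∈ closure V, z ∉ Γ → l z < c := by
  obtain ⟨l, c, hl, hne, rfl⟩ := h
  refine ⟨(hVb.subset inter_subset_left).isCompact_closure,
    (hVc.inter (convex_halfSpace_gt l.toLinearMap.isLinear c)).closure, l, c, ?_, ?_⟩
  · intro z hz
    have : closure (V ∩ {z | c < l z}) ⊆ {z | c ≤ l z} :=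
      closure_minimal (fun w hw => by
        have h2 := hw.2
        simp only [mem_ofPred_eq] at h2 ⊢
        exact h2.le) (isClosed_le continuous_const l.continuous)
    exact this hz
  · intro z hz hzn
    by_contra hcz
    push Not at hcz
    apply hzn
    obtain ⟨q, hqV, hq⟩ := hne
    have hsub : openSegment ℝ q z ⊆ V ∩ {z | c < l z} := by
      intro w hw
      constructor
      · have := hVc.openSegment_interior_closure_subset_interior
          (by rwa [hVo.interior_eq]) hz hw
        rwa [hVo.interior_eq] at this
      · obtain ⟨s, t, hs, ht, hst, rfl⟩ := hw
        simp only [mem_ofPred_eq, map_add, map_smul, smul_eq_mul] at hq ⊢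
        have e1 : s * c < s * l q := by gcongr
        have e2 : t * c ≤ t * l z := by gcongr
        have e3 : s * c + t * c = c := by rw [← add_mul, hst, one_mul]
        linarith
    apply closure_mono hsub
    rw [closure_openSegment]
    exact right_mem_segment ℝ q z

lemma caps_polyConvex {N : ℕ} {V : Set (EN N)} (hVo : IsOpen V) (hVc : Convex ℝ V)
    (hVb : Bornology.IsBounded V) {n : ℕ} (Γ : Fin n → Set (EN N))
    (hΓ : ∀ i, IsClosedCap V (Γ i)) (hd : ∀ i j, i ≠ j → Disjoint (Γ i) (Γ j))
    (K : Set (EN N)) (hK : IsCompact K) (hKp : PolynomiallyConvex K) (hKV : K ⊆ V)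
    (hdK : Disjoint (⋃ i, Γ i) K) : PolynomiallyConvex ((⋃ i, Γ i) ∪ K) := by
  have hΓV : ∀ i, Γ i ⊆ closure V := by
    intro i
    obtain ⟨l, c, hl, hne, h⟩ := hΓ i
    rw [h]
    exact closure_mono inter_subset_left
  have hcomp : ∀ i, IsCompact (Γ i) := fun i => (closedCap_props hVo hVc hVb (hΓ i)).1
  have key : ∀ s : Finset (Fin n), polyHull ((⋃ i ∈ s, Γ i) ∪ K) ⊆ (⋃ i ∈ s, Γ i) ∪ K := by
    intro s
    induction s using Finset.induction_on with
    | empty => simp; exact hKp.le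
    | insert a s has ih =>
      obtain ⟨h1, h2, l, c, h3, h4⟩ := closedCap_props hVo hVc hVb (hΓ a)
      rw [Finset.set_biUnion_insert, union_assoc]
      refine (polyHull_union (hcomp a)
        ((s.isCompact_biUnion fun i _ => hcomp i).union hK) l c h3 ?_).trans
        (union_subset_union (polyHull_convex h1 h2) ih)
      rintro z (hz | hz)
      · obtain ⟨i, hi, hzi⟩ := mem_iUnion₂.1 hz
        refine h4 z (hΓV i hzi) fun hza => ?_
        exact disjoint_left.1 (hd i a (by rintro rfl; exact has hi)) hzi hza
      · exact h4 z (subset_closure (hKV hz)) fun hza =>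
          disjoint_left.1 hdK (mem_iUnion.2 ⟨a, hza⟩) hz
  refine Subset.antisymm ?_ (subset_polyHull' ((isCompact_iUnion hcomp).union hK))
  simpa using key Finset.univ

open Set Filter Topology Metric MeasureTheory
open scoped ENNReal NNReal InnerProductSpace ComplexConjugate

lemma cone_mem {E : Type*} [NormedAddCommGroup E] [NormedSpace ℝ E] {V : Set E}
    (hVo : IsOpen V) (hVc : Convex ℝ V) {p0 : E} {r0 : ℝ} (hb : ball p0 r0 ⊆ V)
    {y v : E} (hy : y ∈ closure V) {t : ℝ} (ht : 0 < t) (ht1 : t ≤ 1)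
    (hv : ‖v + t • (y - p0)‖ < t * r0) : y + v ∈ V := by
  set q := p0 + t⁻¹ • (v + t • (y - p0)) with hq
  have hqV : q ∈ interior V := by
    rw [hVo.interior_eq]
    apply hb
    rw [mem_ball, dist_eq_norm, hq, add_sub_cancel_left, norm_smul, Real.norm_of_nonneg (by positivity)]
    rwa [inv_mul_lt_iff₀ ht]
  have := hVc.combo_closure_interior_mem_interior hy hqV (by linarith : 0 ≤ 1 - t) ht (by ring)
  rw [hVo.interior_eq] at this
  convert this using 1
  rw [hq, smul_add, smul_smul, mul_inv_cancel₀ ht.ne', one_smul, smul_sub, sub_smul, one_smul]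
  abel

lemma preconn_frontier {E : Type*} [TopologicalSpace E] {V S : Set E} (hVo : IsOpen V)
    (hS : IsPreconnected S) {a b : E} (ha : a ∈ S) (hb : b ∈ S) (haV : a ∈ V) (hbV : b ∉ V) :
    ∃ y ∈ S, y ∈ frontier V := by
  by_contra hcon
  push Not at hcon
  have hbc : b ∈ (closure V)ᶜ := by
    intro hb'
    apply hcon b hb
    rw [hVo.frontier_eq]; exact ⟨hb', hbV⟩
  obtain ⟨z, -, hz1, hz2⟩ := hS V (closure V)ᶜ hVo isClosed_closure.isOpen_compl (by
    intro z hz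
    by_cases h : z ∈ V
    · exact Or.inl h
    · right; intro hz'
      apply hcon z hz
      rw [hVo.frontier_eq]; exact ⟨hz', h⟩) ⟨a, ha, haV⟩ ⟨b, hb, hbc⟩
  exact hz2 (subset_closure hz1)

lemma exists_chart {E : Type*} [NormedAddCommGroup E] [NormedSpace ℝ E] [FiniteDimensional ℝ E]
    {V : Set E} (hVo : IsOpen V) (hVc : Convex ℝ V) {p0 : E} {r0 M : ℝ} (hr0 : 0 < r0)
    (hb : ball p0 r0 ⊆ V) (hM : closure V ⊆ closedBall p0 M) {d : ℕ}
    (hd : Module.finrank ℝ E = d + 1) {x : E} (hx : x ∈ frontier V) :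
    ∃ (F : Submodule ℝ E) (P : E →L[ℝ] F), Module.finrank ℝ F = d ∧ LipschitzWith 2 P ∧
      (∀ y ∈ frontier V ∩ closedBall x (r0/4), ∀ y' ∈ frontier V ∩ closedBall x (r0/4),
        dist y y' ≤ (1 + 2 * M / r0) * dist (P y) (P y')) ∧
      ∀ R, 0 < R → R ≤ r0/4 →
        closedBall (P x) (r0 / (8 * M) * R) ⊆ P '' (frontier V ∩ closedBall x R) := by
  set u := x - p0 with hu
  rw [hVo.frontier_eq] at hx
  have hxV : x ∉ V := hx.2
  have hr0u : r0 ≤ ‖u‖ := by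
    by_contra h
    push Not at h
    exact hxV (hb (by rwa [mem_ball, dist_eq_norm]))
  have huM : ‖u‖ ≤ M := by
    have := hM hx.1
    rwa [mem_closedBall, dist_eq_norm] at this
  have hu0 : 0 < ‖u‖ := hr0.trans_le hr0u
  have hM0 : 0 < M := hu0.trans_le huM
  obtain ⟨f, hf1, hfu⟩ := exists_dual_vector ℝ u hu0.ne'
  have hfu' : f u = ‖u‖ := hfu
  set F : Submodule ℝ E := LinearMap.ker (f : E →ₗ[ℝ] ℝ) with hF
  set P0 : E →L[ℝ] E := ContinuousLinearMap.id ℝ E - f.smulRight (‖u‖⁻¹ • u) with hP0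
  have hP0a : ∀ v, P0 v = v - (f v / ‖u‖) • u := by
    intro v
    simp [hP0, smul_smul, div_eq_mul_inv]
  have hP0F : ∀ v, P0 v ∈ F := by
    intro v
    rw [hF, LinearMap.mem_ker, hP0a]
    simp only [ContinuousLinearMap.coe_coe, map_sub, map_smul, hfu', smul_eq_mul]
    field_simp
    simp
  set P : E →L[ℝ] F := P0.codRestrict F hP0F with hP
  have hPn : ∀ v, ‖P v‖ = ‖v - (f v / ‖u‖) • u‖ := by
    intro v
    rw [← hP0a]; rfl
  have hfv : ∀ v, |f v| ≤ ‖v‖ := by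
    intro v
    have := f.le_opNorm v
    rwa [hf1, one_mul] at this
  refine ⟨F, P, ?_, ?_, ?_, ?_⟩
  · have h := LinearMap.finrank_range_add_finrank_ker (f : E →ₗ[ℝ] ℝ)
    have h1 : LinearMap.range (f : E →ₗ[ℝ] ℝ) = ⊤ := by
      apply LinearMap.range_eq_top.2
      apply LinearMap.surjective
      intro h0
      have : f u = 0 := by
        have := congrArg (fun g => g u) h0
        simpa using this
      rw [hfu'] at this
      exact hu0.ne' this
    rw [h1, finrank_top, Module.finrank_self, hd] at h
    change Module.finrank ℝ (LinearMap.ker (f : E →ₗ[ℝ] ℝ)) = d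
    omega
  · apply LipschitzWith.of_dist_le_mul
    intro y y'
    rw [dist_eq_norm, ← map_sub, dist_eq_norm, hPn]
    set v := y - y'
    calc ‖v - (f v / ‖u‖) • u‖ ≤ ‖v‖ + ‖(f v / ‖u‖) • u‖ := norm_sub_le _ _
      _ = ‖v‖ + |f v| := by
        rw [norm_smul, Real.norm_eq_abs, abs_div, abs_of_pos hu0, div_mul_cancel₀ _ hu0.ne']
      _ ≤ (2:ℝ≥0) * ‖v‖ := by have := hfv v; push_cast; linarith
  · have key : ∀ y ∈ frontier V ∩ closedBall x (r0/4), ∀ y' ∈ frontier V ∩ closedBall x (r0/4),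
        f (y' - y) ≤ 0 → -(f (y' - y) / ‖u‖) * r0 / 2 ≤ ‖P (y' - y)‖ := by
      intro y hy y' hy' hneg
      by_contra hcon
      push Not at hcon
      rw [hPn] at hcon
      set v := y' - y with hv
      set t := -(f v / ‖u‖) with ht
      have htw : v - (f v / ‖u‖) • u = v + t • u := by rw [ht, neg_smul, sub_eq_add_neg]
      rw [htw] at hcon
      have ht0 : 0 < t := by
        have h1 := (norm_nonneg (v + t • u)).trans_lt hcon
        by_contra h
        push Not at h
        nlinarith
      have hy1 : ‖y - x‖ ≤ r0/4 := by have := hy.2; rwa [mem_closedBall, dist_eq_norm] at this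
      have hy2 : ‖y' - x‖ ≤ r0/4 := by have := hy'.2; rwa [mem_closedBall, dist_eq_norm] at this
      have hvn : ‖v‖ ≤ r0/2 := by
        have : v = (y' - x) - (y - x) := by rw [hv]; abel
        rw [this]; exact (norm_sub_le _ _).trans (by linarith)
      have ht1 : t ≤ 1 := by
        rw [ht, ← neg_div, div_le_one hu0]
        have := neg_abs_le (f v)
        have := hfv v
        linarith
      have : y + v ∈ V := by
        apply cone_mem hVo hVc hb (frontier_subset_closure hy.1) ht0 ht1
        have : v + t • (y - p0) = (v + t • u) + t • (y - x) := by
          rw [hu, add_assoc, ← smul_add]; congr 2; abel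
        rw [this]
        calc _ ≤ ‖v + t • u‖ + ‖t • (y - x)‖ := norm_add_le _ _
          _ = ‖v + t • u‖ + t * ‖y - x‖ := by rw [norm_smul, Real.norm_of_nonneg ht0.le]
          _ < t * r0 := by nlinarith
      have hyy : y + v = y' := by rw [hv]; abel
      rw [hyy] at this
      have h2 := hy'.1
      rw [hVo.frontier_eq] at h2
      exact h2.2 this
    have key2 : ∀ y ∈ frontier V ∩ closedBall x (r0/4), ∀ y' ∈ frontier V ∩ closedBall x (r0/4),
        |f (y - y')| / ‖u‖ * r0 / 2 ≤ ‖P (y - y')‖ := by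
      intro y hy y' hy'
      rcases le_total (f (y - y')) 0 with h | h
      · have := key y' hy' y hy h
        rwa [abs_of_nonpos h, neg_div]
      · have h' : f (y' - y) ≤ 0 := by
          rw [← neg_sub, map_neg]; linarith
        have := key y hy y' hy' h'
        rw [← neg_sub y y', map_neg, map_neg, norm_neg] at this
        rw [abs_of_nonneg h]
        convert this using 3
        ring
    intro y hy y' hy'
    have h := key2 y hy y' hy'
    rw [dist_eq_norm, dist_eq_norm, ← map_sub]
    set v := y - y'
    have h3 : ‖v‖ ≤ ‖P v‖ + |f v| := by
      rw [hPn]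
      calc ‖v‖ = ‖(v - (f v / ‖u‖) • u) + (f v / ‖u‖) • u‖ := by rw [sub_add_cancel]
        _ ≤ ‖v - (f v / ‖u‖) • u‖ + ‖(f v / ‖u‖) • u‖ := norm_add_le _ _
        _ = _ := by
          congr 1
          rw [norm_smul, Real.norm_eq_abs, abs_div, abs_of_pos hu0, div_mul_cancel₀ _ hu0.ne']
    have h4 : |f v| ≤ 2 * M / r0 * ‖P v‖ := by
      have h5 : |f v| / ‖u‖ * r0 / 2 * (2 * ‖u‖ / r0) = |f v| := by field_simp
      have h6 : |f v| ≤ ‖P v‖ * (2 * ‖u‖ / r0) := by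
        rw [← h5]; gcongr
      refine h6.trans ?_
      rw [mul_comm]; gcongr
    linarith
  · intro R hR hRr w' hw'
    set w : E := ((w' - P x : F) : E) with hw
    have hwf : f w = 0 := (w' - P x).2
    have hwn : ‖w‖ ≤ r0 / (8 * M) * R := by
      rw [mem_closedBall, dist_eq_norm] at hw'
      exact hw'
    set t := R / (2 * ‖u‖) with ht
    have ht0 : 0 < t := by positivity
    have htu : t * ‖u‖ = R / 2 := by rw [ht]; field_simp
    have ht1 : t ≤ 1 := by nlinarith
    have hwt : ‖w‖ ≤ t * r0 / 4 := by
      refine hwn.trans ?_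
      rw [ht]
      calc r0 / (8 * M) * R ≤ r0 / (8 * ‖u‖) * R := by gcongr
        _ = _ := by field_simp; norm_num
    have hwR : ‖w‖ ≤ R / 8 := by nlinarith
    have hin : x + (w - t • u) ∈ V := by
      apply cone_mem hVo hVc hb hx.1 ht0 ht1
      rw [← hu, sub_add_cancel]
      nlinarith
    have hout : x + (w + t • u) ∉ V := by
      intro hh
      apply hxV
      have := cone_mem hVo hVc hb (subset_closure hh) (v := -(w + t • u)) ht0 ht1 ?_
      · rwa [add_neg_cancel_right] at this
      · have e : -(w + t • u) + t • (x + (w + t • u) - p0) = -w + t • (w + t • u) := by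
          have : x + (w + t • u) - p0 = u + (w + t • u) := by rw [hu]; abel
          rw [this, smul_add]; abel
        rw [e]
        calc _ ≤ ‖-w‖ + ‖t • (w + t • u)‖ := norm_add_le _ _
          _ ≤ ‖w‖ + t * (‖w‖ + t * ‖u‖) := by
            rw [norm_neg, norm_smul, Real.norm_of_nonneg ht0.le]
            gcongr
            refine (norm_add_le _ _).trans ?_
            rw [norm_smul, Real.norm_of_nonneg ht0.le]
          _ < t * r0 := by rw [htu]; nlinarith
    have hS : IsPreconnected ((fun s : ℝ => x + (w + s • u)) '' Icc (-t) t) :=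
      isPreconnected_Icc.image _ (by fun_prop)
    obtain ⟨y, ⟨s, hs, rfl⟩, hy⟩ := preconn_frontier hVo hS
      (a := x + (w - t • u)) (b := x + (w + t • u))
      ⟨-t, ⟨le_rfl, by linarith⟩, by simp [sub_eq_add_neg]⟩ ⟨t, ⟨by linarith, le_rfl⟩, rfl⟩ hin hout
    refine ⟨_, ⟨hy, ?_⟩, ?_⟩
    · rw [mem_closedBall, dist_eq_norm, add_sub_cancel_left]
      refine (norm_add_le _ _).trans ?_
      rw [norm_smul, Real.norm_eq_abs]
      have : |s| ≤ t := abs_le.2 hs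
      nlinarith
    · apply Subtype.ext
      change P0 (x + (w + s • u)) = w'
      have e1 : P0 (w + s • u) = w := by
        rw [hP0a, map_add, map_smul, hwf, hfu', zero_add, smul_eq_mul, mul_div_assoc,
          div_self hu0.ne', mul_one, add_sub_cancel_right]
      rw [map_add, e1, hw]
      change P0 x + ((w' : E) - P0 x) = w'
      abel

lemma frontier_doubling {E : Type*} [NormedAddCommGroup E] [NormedSpace ℝ E]
    [FiniteDimensional ℝ E] [MeasurableSpace E] [BorelSpace E]
    {V : Set E} (hVo : IsOpen V) (hVc : Convex ℝ V) {p0 : E} {r0 M : ℝ} (hr0 : 0 < r0)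
    (hM0 : 0 < M)
    (hb : ball p0 r0 ⊆ V) (hM : closure V ⊆ closedBall p0 M) {d : ℕ}
    (hd : Module.finrank ℝ E = d + 1) {θ : ℝ} (hθ : 0 < θ) (hθ1 : θ ≤ 1) :
    ∃ C : ℝ≥0, ∀ x ∈ frontier V, ∀ r, 0 < r → r ≤ r0 / 12 →
      (Measure.hausdorffMeasure (d:ℝ) : Measure E) (frontier V ∩ closedBall x (3 * r)) ≤
        C * (Measure.hausdorffMeasure (d:ℝ) : Measure E) (frontier V ∩ closedBall x (θ * r)) ∧
      (Measure.hausdorffMeasure (d:ℝ) : Measure E) (frontier V ∩ closedBall x (3 * r)) < ⊤ := by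
  set L : ℝ≥0 := ⟨1 + 2 * M / r0, by positivity⟩ with hL
  set κ := r0 / (8 * M) with hκ
  have hκ0 : 0 < κ := by positivity
  refine ⟨L ^ (d:ℝ) * (Real.toNNReal ((6 / (κ * θ)) ^ d)) * 2 ^ (d:ℝ), ?_⟩
  intro x hx r hr hr1
  obtain ⟨F, P, hFd, hPl, hPa, hPs⟩ := exists_chart hVo hVc hr0 hb hM hd hx
  have hup : (Measure.hausdorffMeasure (d:ℝ) : Measure E) (frontier V ∩ closedBall x (3 * r)) ≤
      (L:ℝ≥0∞) ^ (d:ℝ) * (Measure.hausdorffMeasure (d:ℝ) : Measure F) (closedBall (P x) (6 * r)) := by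
    set A := frontier V ∩ closedBall x (3 * r) with hA
    have hAs : A ⊆ frontier V ∩ closedBall x (r0/4) :=
      inter_subset_inter_right _ (closedBall_subset_closedBall (by linarith))
    have hinj : InjOn P A := by
      intro y hy y' hy' h
      have := hPa y (hAs hy) y' (hAs hy')
      rw [h, dist_self, mul_zero] at this
      exact dist_le_zero.1 this
    have hg : LipschitzOnWith L (Function.invFunOn P A) (P '' A) := by
      apply LipschitzOnWith.of_dist_le_mul
      rintro _ ⟨y, hy, rfl⟩ _ ⟨y', hy', rfl⟩
      rw [hinj.leftInvOn_invFunOn hy, hinj.leftInvOn_invFunOn hy']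
      exact hPa y (hAs hy) y' (hAs hy')
    have h1 := hg.hausdorffMeasure_image_le (d := (d:ℝ)) (by positivity)
    rw [hinj.leftInvOn_invFunOn.image_image] at h1
    refine h1.trans ?_
    gcongr
    rintro _ ⟨y, hy, rfl⟩
    have h2 := hPl.dist_le_mul y x
    have h3 : dist y x ≤ 3 * r := hy.2
    rw [mem_closedBall]
    push_cast at h2
    linarith
  have hlow : (Measure.hausdorffMeasure (d:ℝ) : Measure F) (closedBall (P x) (κ * (θ * r))) ≤
      (2:ℝ≥0∞) ^ (d:ℝ) *
        (Measure.hausdorffMeasure (d:ℝ) : Measure E) (frontier V ∩ closedBall x (θ * r)) := by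
    refine (measure_mono (hPs (θ * r) (by positivity) (by nlinarith))).trans ?_
    have := hPl.hausdorffMeasure_image_le (d := (d:ℝ)) (by positivity)
      (frontier V ∩ closedBall x (θ * r))
    simpa using this
  have hhaar : Measure.IsAddHaarMeasure (Measure.hausdorffMeasure (d:ℝ) : Measure F) := by
    rw [← hFd]; infer_instance
  have hmul : (Measure.hausdorffMeasure (d:ℝ) : Measure F) (closedBall (P x) (6 * r)) =
      ENNReal.ofReal ((6 / (κ * θ)) ^ d) *
        (Measure.hausdorffMeasure (d:ℝ) : Measure F) (closedBall (P x) (κ * (θ * r))) := by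
    have e : 6 * r = 6 / (κ * θ) * (κ * (θ * r)) := by field_simp
    rw [e, Measure.addHaar_closedBall_mul_of_pos _ _ (by positivity), hFd,
      Measure.addHaar_closedBall_center _ (P x)]
  constructor
  · refine hup.trans ?_
    rw [hmul]
    calc _ ≤ (L:ℝ≥0∞) ^ (d:ℝ) * (ENNReal.ofReal ((6 / (κ * θ)) ^ d) * ((2:ℝ≥0∞) ^ (d:ℝ) *
        (Measure.hausdorffMeasure (d:ℝ) : Measure E) (frontier V ∩ closedBall x (θ * r)))) := by
          gcongr
      _ = _ := by
        rw [ENNReal.coe_mul, ENNReal.coe_mul, ENNReal.coe_rpow_of_nonneg _ (by positivity),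
          ENNReal.coe_rpow_of_nonneg _ (by positivity)]
        simp only [mul_assoc, ENNReal.ofReal, ENNReal.coe_ofNat]
  · refine hup.trans_lt ?_
    apply ENNReal.mul_lt_top
    · exact ENNReal.rpow_lt_top_of_nonneg (by positivity) ENNReal.coe_ne_top
    · exact (isCompact_closedBall _ _).measure_lt_top

lemma frontier_finite {E : Type*} [NormedAddCommGroup E] [NormedSpace ℝ E]
    [FiniteDimensional ℝ E] [MeasurableSpace E] [BorelSpace E]
    {V : Set E} (hVo : IsOpen V) (hVc : Convex ℝ V) {p0 : E} {r0 M : ℝ} (hr0 : 0 < r0)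
    (hM0 : 0 < M)
    (hb : ball p0 r0 ⊆ V) (hM : closure V ⊆ closedBall p0 M) {d : ℕ}
    (hd : Module.finrank ℝ E = d + 1) :
    (Measure.hausdorffMeasure (d:ℝ) : Measure E) (frontier V) < ⊤ := by
  obtain ⟨C, hC⟩ := frontier_doubling hVo hVc hr0 hM0 hb hM hd one_pos le_rfl
  have hcomp : IsCompact (frontier V) :=
    (isCompact_closedBall p0 M).of_isClosed_subset isClosed_frontier
      (frontier_subset_closure.trans hM)
  apply hcomp.measure_lt_top_of_nhdsWithin
  intro x hx
  refine ⟨frontier V ∩ closedBall x (3 * (r0/12)), ?_, (hC x hx (r0/12) (by positivity) le_rfl).2⟩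
  exact inter_mem_nhdsWithin _ (closedBall_mem_nhds _ (by positivity))

open Set Filter Topology Metric MeasureTheory
open scoped ENNReal NNReal InnerProductSpace ComplexConjugate

lemma local_taylor {E : Type*} [NormedAddCommGroup E] [NormedSpace ℝ E] {ρ : E → ℝ} {x0 : E}
    (h : ContDiffAt ℝ 2 ρ x0) {η : ℝ} (hη : 0 < η) :
    ∃ δ > 0, ∀ y ∈ ball x0 δ, ∀ z ∈ ball x0 δ,
      |ρ z - ρ y - fderiv ℝ ρ y (z - y) -
        (1/2) * fderiv ℝ (fderiv ℝ ρ) x0 (z - y) (z - y)| ≤ η * ‖z - y‖ ^ 2 := by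
  set H := fderiv ℝ (fderiv ℝ ρ) x0 with hH
  have hsymm : ∀ v w, H v w = H w v := by
    have : IsSymmSndFDerivAt ℝ ρ x0 := h.isSymmSndFDerivAt (by simp)
    intro v w
    exact this v w
  have h1 : ContDiffAt ℝ 1 (fderiv ℝ ρ) x0 := h.fderiv_right (by norm_num)
  have hs : HasStrictFDerivAt (fderiv ℝ ρ) H x0 := h1.hasStrictFDerivAt one_ne_zero
  have hlo := hs.isLittleO.def hη
  have hev : ∀ᶠ y in 𝓝 x0, DifferentiableAt ℝ ρ y := by
    filter_upwards [h.eventually (by simp)] with y hy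
    exact hy.differentiableAt (by norm_num)
  have hev2 : ∀ᶠ p in 𝓝 (x0, x0), DifferentiableAt ℝ ρ (p : E × E).1 := by
    rw [nhds_prod_eq]
    exact hev.prod_inl _
  obtain ⟨δ, hδ, hball⟩ := Metric.eventually_nhds_iff_ball.1 (hlo.and hev2)
  refine ⟨δ, hδ, fun y hy z hz => ?_⟩
  have hpair : ∀ a ∈ ball x0 δ, ∀ b ∈ ball x0 δ, ((a, b) : E × E) ∈ ball ((x0, x0) : E × E) δ := by
    intro a ha b hb
    rw [← ball_prod_same]
    exact ⟨ha, hb⟩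
  set G : E → ℝ := fun ζ => ρ ζ - fderiv ℝ ρ y (ζ - y) - (1/2) * H (ζ - y) (ζ - y) with hG
  have hGd : ∀ ζ ∈ ball x0 δ, HasFDerivAt G (fderiv ℝ ρ ζ - fderiv ℝ ρ y - H (ζ - y)) ζ := by
    intro ζ hζ
    have hd : DifferentiableAt ℝ ρ ζ := (hball _ (hpair ζ hζ y hy)).2
    have e1 : HasFDerivAt (fun ζ : E => ζ - y) (ContinuousLinearMap.id ℝ E) ζ :=
      (hasFDerivAt_id ζ).sub_const y
    have e2 : HasFDerivAt (fun ζ : E => fderiv ℝ ρ y (ζ - y))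
        ((fderiv ℝ ρ y).comp (ContinuousLinearMap.id ℝ E)) ζ :=
      (fderiv ℝ ρ y).hasFDerivAt.comp ζ e1
    have e3 : HasFDerivAt (fun ζ : E => H (ζ - y)) (H.comp (ContinuousLinearMap.id ℝ E)) ζ :=
      H.hasFDerivAt.comp ζ e1
    have e4 := (e3.clm_apply e1).const_mul (1/2 : ℝ)
    have e5 := (hd.hasFDerivAt.sub e2).sub e4
    have e6 : HasFDerivAt G _ ζ := e5
    refine e6.congr_fderiv (ContinuousLinearMap.ext fun v => ?_)
    simp only [sub_apply, ContinuousLinearMap.comp_id,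
      smul_apply, add_apply,
      ContinuousLinearMap.flip_apply, smul_eq_mul]
    rw [hsymm v (ζ - y)]
    ring
  have hseg : segment ℝ y z ⊆ ball x0 δ := (convex_ball x0 δ).segment_subset hy hz
  have hmv := (convex_segment y z).norm_image_sub_le_of_norm_hasFDerivWithin_le (f := G)
    (f' := fun ζ => fderiv ℝ ρ ζ - fderiv ℝ ρ y - H (ζ - y)) (C := η * ‖z - y‖)
    (fun ζ hζ => (hGd ζ (hseg hζ)).hasFDerivWithinAt)
    (fun ζ hζ => by
      have := (hball _ (hpair ζ (hseg hζ) y hy)).1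
      refine this.trans ?_
      gcongr
      obtain ⟨s, hs0, rfl⟩ := (segment_eq_image' ℝ y z ▸ hζ : ζ ∈ _)
      simp only [add_sub_cancel_left, norm_smul, Real.norm_of_nonneg hs0.1]
      nlinarith [hs0.2, norm_nonneg (z - y)])
    (left_mem_segment ℝ y z) (right_mem_segment ℝ y z)
  rw [Real.norm_eq_abs] at hmv
  have e : G z - G y = ρ z - ρ y - fderiv ℝ ρ y (z - y) - (1/2) * H (z - y) (z - y) := by
    simp only [hG, sub_self, map_zero]
    ring
  rw [e] at hmv
  refine hmv.trans (le_of_eq (by ring))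

lemma quad_compact {E : Type*} [NormedAddCommGroup E] [NormedSpace ℝ E] [FiniteDimensional ℝ E]
    (H : E →L[ℝ] E →L[ℝ] ℝ) (l : E →L[ℝ] ℝ) (hp : ∀ w, w ≠ 0 → l w = 0 → 0 < H w w) :
    ∃ c > 0, ∃ K ≥ 0, ∀ h, c * ‖h‖ ^ 2 ≤ H h h + K * (l h) ^ 2 := by
  have hScomp : IsCompact (sphere (0:E) 1) := isCompact_sphere 0 1
  have hcont : ∀ n : ℕ, Continuous (fun h : E => H h h + n * (l h) ^ 2) := fun n => by fun_prop
  obtain ⟨n, hn⟩ := hScomp.elim_directed_cover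
    (fun n : ℕ => {h : E | 0 < H h h + n * (l h) ^ 2})
    (fun n => isOpen_lt continuous_const (hcont n))
    (by
      intro w hw
      have hw0 : w ≠ 0 := by
        rintro rfl; simp at hw
      simp only [mem_iUnion, mem_ofPred_eq]
      by_cases hl : l w = 0
      · exact ⟨0, by simpa using hp w hw0 hl⟩
      · have hl2 : 0 < (l w) ^ 2 := by positivity
        obtain ⟨n, hn⟩ := exists_nat_gt (-(H w w) / (l w) ^ 2)
        refine ⟨n, ?_⟩
        rw [div_lt_iff₀ hl2] at hn
        linarith)
    (directed_of_isDirected_le (by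
      intro a b hab w hw
      simp only [mem_ofPred_eq] at hw ⊢
      have : (a:ℝ) ≤ b := by exact_mod_cast hab
      nlinarith [sq_nonneg (l w)]))
  have hmain : ∃ c > 0, ∀ h ∈ sphere (0:E) 1, c ≤ H h h + n * (l h) ^ 2 := by
    rcases (sphere (0:E) 1).eq_empty_or_nonempty with he | hne
    · exact ⟨1, one_pos, by simp [he]⟩
    · obtain ⟨w, hw, hmin⟩ := hScomp.exists_isMinOn hne (hcont n).continuousOn
      exact ⟨_, hn hw, fun h hh => hmin hh⟩
  obtain ⟨c, hc, hcm⟩ := hmain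
  refine ⟨c, hc, n, by positivity, fun h => ?_⟩
  by_cases h0 : h = 0
  · simp [h0]
  have hn0 : 0 < ‖h‖ := norm_pos_iff.2 h0
  have := hcm (‖h‖⁻¹ • h) (by simp [norm_smul, hn0.ne'])
  simp only [map_smul, smul_apply, smul_eq_mul] at this
  have e : ‖h‖⁻¹ * (‖h‖⁻¹ * H h h) + n * (‖h‖⁻¹ * l h) ^ 2 = (H h h + n * (l h)^2) / ‖h‖ ^ 2 := by
    field_simp
  rw [e, le_div_iff₀ (by positivity)] at this
  exact this

lemma local_quad_aux {D K c n2 Hw q rz e' : ℝ} (hK : 0 ≤ K) (hc : 0 < c) (hn2 : 0 ≤ n2)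
    (hT : rz - 0 - -D - 1 / 2 * Hw ≤ c / 8 * n2)
    (hT' : -(c / 8 * n2) ≤ rz - 0 - -D - 1 / 2 * Hw) (hrz : rz ≤ 0)
    (hKD1 : -(1/2) ≤ K * D) (hKD2 : K * D ≤ 1 / 2)
    (hsq : q ≤ 2 * D ^ 2 + 2 * e' ^ 2 * n2) (he' : K * e' ^ 2 ≤ c / 8)
    (hq : c * n2 ≤ Hw + K * q) : c / 6 * n2 ≤ D := by
  have h2 : K * q ≤ K * (2 * D ^ 2) + 2 * (c / 8) * n2 := by
    have := mul_le_mul_of_nonneg_left hsq hK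
    have h3 := mul_le_mul_of_nonneg_right he' hn2
    linarith
  have h4 : c / 4 * n2 ≤ D * (1 + K * D) := by
    linarith
  have hw2 : 0 ≤ c / 4 * n2 := by positivity
  have hD0 : 0 ≤ D := by
    by_contra hneg
    push Not at hneg
    nlinarith
  have h5 : D * (1 + K * D) ≤ D * (1 + 1 / 2) := by gcongr
  linarith

lemma local_quad {E : Type*} [NormedAddCommGroup E] [NormedSpace ℝ E] [FiniteDimensional ℝ E]
    {ρ : E → ℝ} {x0 : E} (h : ContDiffAt ℝ 2 ρ x0)
    (hp : ∀ w, w ≠ 0 → fderiv ℝ ρ x0 w = 0 → 0 < fderiv ℝ (fderiv ℝ ρ) x0 w w) :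
    ∃ c > 0, ∃ C > 0, ∃ δ > 0, ∀ y ∈ ball x0 δ, ∀ z ∈ ball x0 δ, ρ y = 0 →
      (ρ z ≤ 0 → c * ‖z - y‖ ^ 2 ≤ fderiv ℝ ρ y (y - z)) ∧
      (ρ z = 0 → fderiv ℝ ρ y (y - z) ≤ C * ‖z - y‖ ^ 2) := by
  obtain ⟨c, hc, K, hK, hcK⟩ := quad_compact (fderiv ℝ (fderiv ℝ ρ) x0) (fderiv ℝ ρ x0) hp
  set H := fderiv ℝ (fderiv ℝ ρ) x0 with hH
  obtain ⟨δ1, hδ1, ht⟩ := local_taylor h (by positivity : 0 < c / 8)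
  obtain ⟨e', he'0, he'⟩ : ∃ e' > 0, K * e' ^ 2 ≤ c / 8 := by
    refine ⟨min 1 (c / (8 * (K + 1))), by positivity, ?_⟩
    set m := min 1 (c / (8 * (K + 1)))
    have hm0 : 0 < m := by positivity
    have hm1 : m ≤ 1 := min_le_left _ _
    have hm2 : m ≤ c / (8 * (K + 1)) := min_le_right _ _
    rw [le_div_iff₀ (by positivity)] at hm2
    have : m ^ 2 ≤ m := by nlinarith
    nlinarith
  have hcd : ContinuousAt (fderiv ℝ ρ) x0 :=
    ((h.fderiv_right (m := 1) (by norm_num)) : ContDiffAt ℝ 1 (fderiv ℝ ρ) x0).continuousAt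
  obtain ⟨δ2, hδ2, hd2⟩ := Metric.continuousAt_iff.1 hcd e' he'0
  set B := ‖fderiv ℝ ρ x0‖ + e' with hB
  have hB0 : 0 < B := by positivity
  set δ3 := 1 / (4 * (K + 1) * B) with hδ3
  refine ⟨c / 6, by positivity, ‖H‖ / 2 + c / 8, by positivity, min δ1 (min δ2 δ3),
    by positivity, fun y hy z hz hy0 => ?_⟩
  have hy1 : y ∈ ball x0 δ1 := ball_subset_ball (min_le_left _ _) hy
  have hz1 : z ∈ ball x0 δ1 := ball_subset_ball (min_le_left _ _) hz
  have hy2 : dist y x0 < δ2 := ball_subset_ball ((min_le_right _ _).trans (min_le_left _ _)) hy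
  have hy3 : dist y x0 < δ3 := ball_subset_ball ((min_le_right _ _).trans (min_le_right _ _)) hy
  have hz3 : dist z x0 < δ3 := ball_subset_ball ((min_le_right _ _).trans (min_le_right _ _)) hz
  have hT := ht y hy1 z hz1
  have hdd := hd2 hy2
  rw [dist_eq_norm] at hdd
  set w := z - y with hw
  have eD : fderiv ℝ ρ y (y - z) = - fderiv ℝ ρ y w := by rw [hw, ← map_neg, neg_sub]
  rw [eD]
  set D := - fderiv ℝ ρ y w with hD
  have eD' : fderiv ℝ ρ y w = - D := by rw [hD, neg_neg]
  rw [eD', hy0, abs_le] at hT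
  have hH2 : |H w w| ≤ ‖H‖ * ‖w‖ ^ 2 := by
    have := H.le_opNorm₂ w w
    rw [Real.norm_eq_abs] at this
    refine this.trans (le_of_eq (by ring))
  have hdw : |fderiv ℝ ρ y w - fderiv ℝ ρ x0 w| ≤ e' * ‖w‖ := by
    have := (fderiv ℝ ρ y - fderiv ℝ ρ x0).le_opNorm w
    rw [Real.norm_eq_abs, sub_apply] at this
    refine this.trans ?_
    gcongr
  constructor
  · intro hz0
    have hKD : |K * D| ≤ 1 / 2 := by
      have hyB : ‖fderiv ℝ ρ y‖ ≤ B := by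
        have := norm_sub_norm_le (fderiv ℝ ρ y) (fderiv ℝ ρ x0)
        linarith
      have hwn : ‖w‖ ≤ 2 * δ3 := by
        have := dist_triangle_right z y x0
        rw [dist_eq_norm] at this
        linarith
      have hDB : |D| ≤ B * (2 * δ3) := by
        rw [hD, abs_neg]
        refine ((fderiv ℝ ρ y).le_opNorm w).trans ?_
        gcongr
      have e : (K + 1) * (B * (2 * δ3)) = 1 / 2 := by
        rw [hδ3]; field_simp; norm_num
      rw [abs_mul, abs_of_nonneg hK]
      nlinarith [abs_nonneg D]
    rw [abs_le] at hKD
    have hsq : (fderiv ℝ ρ x0 w) ^ 2 ≤ 2 * D ^ 2 + 2 * e' ^ 2 * ‖w‖ ^ 2 := by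
      rw [eD'] at hdw
      have h1 : (-D - fderiv ℝ ρ x0 w) ^ 2 ≤ (e' * ‖w‖) ^ 2 := by
        rw [← sq_abs (-D - _)]
        gcongr
      nlinarith [sq_nonneg (-D + (-D - fderiv ℝ ρ x0 w))]
    have hq := hcK w
    exact local_quad_aux hK hc (sq_nonneg _) hT.2 hT.1 hz0 hKD.1 hKD.2 hsq he' hq
  · intro hz0
    rw [hz0] at hT
    have := le_abs_self (H w w)
    nlinarith [hT.1, hT.2]

lemma global_quad {E : Type*} [NormedAddCommGroup E] [NormedSpace ℝ E] [FiniteDimensional ℝ E]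
    {V W : Set E} {ρ : E → ℝ} (hVc : Convex ℝ V) {p0 : E} {M : ℝ} (hM0 : 0 < M)
    (hM : closure V ⊆ closedBall p0 M) (hVo : IsOpen V) (hW : IsOpen W) (hVW : closure V ⊆ W)
    (hρ : ContDiffOn ℝ 2 ρ W) (hVρ : V = {z ∈ W | ρ z < 0})
    (hp : ∀ p ∈ frontier V, ∀ w, w ≠ 0 → fderiv ℝ ρ p w = 0 →
      0 < fderiv ℝ (fderiv ℝ ρ) p w w) :
    ∃ c > 0, ∃ C > 0, ∃ δ > 0, ∀ y ∈ frontier V, ∀ z ∈ closure V,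
      c * ‖z - y‖ ^ 2 ≤ fderiv ℝ ρ y (y - z) ∧
      (z ∈ frontier V → ‖z - y‖ < δ → fderiv ℝ ρ y (y - z) ≤ C * ‖z - y‖ ^ 2) := by
  have hcl : ∀ z ∈ closure V, ρ z ≤ 0 := by
    intro z hz
    have hc : ContinuousWithinAt ρ V z :=
      ((hρ.continuousOn.continuousAt (hW.mem_nhds (hVW hz)))).continuousWithinAt
    have : (𝓝[V] z).NeBot := mem_closure_iff_nhdsWithin_neBot.1 hz
    refine le_of_tendsto hc ?_
    filter_upwards [self_mem_nhdsWithin] with y hy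
    rw [hVρ] at hy
    exact hy.2.le
  have hfr : ∀ z ∈ frontier V, ρ z = 0 := by
    intro z hz
    apply le_antisymm (hcl z (frontier_subset_closure hz))
    by_contra hneg
    push Not at hneg
    rw [hVo.frontier_eq] at hz
    apply hz.2
    rw [hVρ]
    exact ⟨hVW hz.1, hneg⟩
  have hcomp : IsCompact (frontier V) :=
    (isCompact_closedBall p0 M).of_isClosed_subset isClosed_frontier
      (frontier_subset_closure.trans hM)
  have hloc : ∃ c > 0, ∃ C > 0, ∃ δ > 0, ∀ y ∈ frontier V, y ∈ frontier V → ∀ z ∈ closure V,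
      ‖z - y‖ < δ → c * ‖z - y‖ ^ 2 ≤ fderiv ℝ ρ y (y - z) ∧
      (z ∈ frontier V → fderiv ℝ ρ y (y - z) ≤ C * ‖z - y‖ ^ 2) := by
    refine hcomp.induction_on (p := fun s => ∃ c > (0:ℝ), ∃ C > (0:ℝ), ∃ δ > (0:ℝ), ∀ y ∈ s,
      y ∈ frontier V → ∀ z ∈ closure V,
      ‖z - y‖ < δ → c * ‖z - y‖ ^ 2 ≤ fderiv ℝ ρ y (y - z) ∧
      (z ∈ frontier V → fderiv ℝ ρ y (y - z) ≤ C * ‖z - y‖ ^ 2)) ?_ ?_ ?_ ?_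
    · exact ⟨1, one_pos, 1, one_pos, 1, one_pos, by simp⟩
    · rintro s t hst ⟨c, hc, C, hC, δ, hδ, h⟩
      exact ⟨c, hc, C, hC, δ, hδ, fun y hy => h y (hst hy)⟩
    · rintro s t ⟨c, hc, C, hC, δ, hδ, h⟩ ⟨c', hc', C', hC', δ', hδ', h'⟩
      refine ⟨min c c', by positivity, max C C', by positivity, min δ δ', by positivity, ?_⟩
      rintro y (hy | hy) hyf z hz hzy
      · obtain ⟨h1, h2⟩ := h y hy hyf z hz (hzy.trans_le (min_le_left _ _))
        refine ⟨le_trans (by gcongr; exact min_le_left _ _) h1, fun hzf => (h2 hzf).trans ?_⟩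
        gcongr; exact le_max_left _ _
      · obtain ⟨h1, h2⟩ := h' y hy hyf z hz (hzy.trans_le (min_le_right _ _))
        refine ⟨le_trans (by gcongr; exact min_le_right _ _) h1, fun hzf => (h2 hzf).trans ?_⟩
        gcongr; exact le_max_right _ _
    · intro x hx
      have hxW : W ∈ 𝓝 x := hW.mem_nhds (hVW (frontier_subset_closure hx))
      obtain ⟨c, hc, C, hC, δ, hδ, h⟩ := local_quad (hρ.contDiffAt hxW) (hp x hx)
      refine ⟨ball x (δ/2), mem_nhdsWithin_of_mem_nhds (ball_mem_nhds _ (by positivity)),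
        c, hc, C, hC, δ/2, by positivity, ?_⟩
      intro y hy hyf z hz hzy
      have hy' : y ∈ ball x δ := ball_subset_ball (by linarith) hy
      have hz' : z ∈ ball x δ := by
        rw [mem_ball] at hy ⊢
        rw [← dist_eq_norm] at hzy
        have := dist_triangle z y x
        linarith
      obtain ⟨h1, h2⟩ := h y hy' z hz' (hfr y hyf)
      exact ⟨h1 (hcl z hz), fun hzf => h2 (hfr z hzf)⟩
  obtain ⟨c, hc, C, hC, δ, hδ, h⟩ := hloc
  refine ⟨min c (c * δ / (4 * M)), by positivity, C, hC, δ, hδ, fun y hy z hz =>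
    ⟨?_, fun hzf hzy => (h y hy hy z hz hzy).2 hzf⟩⟩
  by_cases hzy : ‖z - y‖ < δ
  · refine le_trans ?_ (h y hy hy z hz hzy).1
    gcongr; exact min_le_left _ _
  push Not at hzy
  set n := ‖z - y‖ with hn
  have hn0 : 0 < n := hδ.trans_le hzy
  set s := δ / (2 * n) with hs
  have hs0 : 0 < s := by positivity
  have hs1 : s ≤ 1 := by rw [hs, div_le_one (by positivity)]; linarith
  have hz' : y + s • (z - y) ∈ closure V :=
    hVc.closure.add_smul_sub_mem (frontier_subset_closure hy) hz ⟨hs0.le, hs1⟩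
  have hsn : s * n = δ / 2 := by rw [hs]; field_simp
  have e1 : ‖y + s • (z - y) - y‖ = δ / 2 := by
    rw [add_sub_cancel_left, norm_smul, Real.norm_of_nonneg hs0.le, ← hn, hsn]
  have h1 := (h y hy hy _ hz' (by rw [e1]; linarith)).1
  have e2 : y - (y + s • (z - y)) = s • (y - z) := by
    rw [sub_add_cancel_left, ← smul_neg, neg_sub]
  rw [e1, e2, map_smul, smul_eq_mul] at h1
  have hnM : n ≤ 2 * M := by
    have a1 := hM hz
    have a2 := hM (frontier_subset_closure hy)
    rw [mem_closedBall] at a1 a2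
    have := dist_triangle_right z y p0
    rw [dist_eq_norm] at this
    linarith
  have h3 : c * δ / 2 * n ≤ fderiv ℝ ρ y (y - z) := by
    have h4 : s * (c * δ / 2 * n) ≤ s * fderiv ℝ ρ y (y - z) := by
      refine le_trans (le_of_eq ?_) h1
      calc s * (c * δ / 2 * n) = c * δ / 2 * (s * n) := by ring
        _ = _ := by rw [hsn]; ring
    exact le_of_mul_le_mul_left h4 hs0
  refine le_trans ?_ h3
  calc min c (c * δ / (4 * M)) * n ^ 2 ≤ (c * δ / (4 * M)) * n ^ 2 := by
        gcongr; exact min_le_right _ _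
    _ = (c * δ / (4 * M)) * n * n := by ring
    _ ≤ (c * δ / (4 * M)) * (2 * M) * n := by gcongr
    _ = _ := by field_simp; norm_num

open Set Filter Topology Metric MeasureTheory
open scoped ENNReal NNReal InnerProductSpace ComplexConjugate

lemma finite_subfamily {α ι : Type*} [MeasurableSpace α] (μ : Measure α) [IsFiniteMeasure μ]
    {s : Set α} (hs : MeasurableSet s) (B : ι → Set α) {u : Set ι} (hu : u.Countable)
    (hB : ∀ a ∈ u, MeasurableSet (B a)) (h0 : μ (s \ ⋃ a ∈ u, B a) = 0) {ε : ℝ≥0∞} (hε : 0 < ε) :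
    ∃ F : Finset ι, (↑F ⊆ u) ∧ μ (s \ ⋃ a ∈ F, B a) < ε := by
  classical
  rcases u.eq_empty_or_nonempty with rfl | hne
  · exact ⟨∅, by simp, by simpa using (by simpa using h0 : μ s = 0).trans_lt hε⟩
  obtain ⟨f, rfl⟩ := hu.exists_eq_range hne
  have hBf : ∀ k, MeasurableSet (B (f k)) := fun k => hB _ ⟨k, rfl⟩
  have ht := tendsto_measure_iInter_atTop (μ := μ)
    (s := fun n : ℕ => s \ ⋃ k ∈ Finset.range n, B (f k))
    (fun n => (hs.diff (Finset.measurableSet_biUnion _ fun k _ => hBf k)).nullMeasurableSet)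
    (by
      intro a b hab
      apply sdiff_subset_sdiff_right
      intro x hx
      simp only [mem_iUnion, Finset.mem_range] at hx ⊢
      obtain ⟨k, hk, hx⟩ := hx
      exact ⟨k, hk.trans_le hab, hx⟩)
    ⟨0, measure_ne_top _ _⟩
  have hle : μ (⋂ n : ℕ, s \ ⋃ k ∈ Finset.range n, B (f k)) = 0 := by
    refine measure_mono_null ?_ h0
    intro x hx
    rw [mem_iInter] at hx
    refine ⟨(hx 0).1, ?_⟩
    intro hx'
    simp only [mem_iUnion, mem_range, exists_prop, exists_exists_eq_and] at hx'
    obtain ⟨k, hk⟩ := hx'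
    apply (hx (k+1)).2
    simp only [mem_iUnion, Finset.mem_range]
    exact ⟨k, by omega, hk⟩
  rw [hle] at ht
  obtain ⟨n, hn⟩ := (ht.eventually (gt_mem_nhds hε)).exists
  refine ⟨(Finset.range n).image f, ?_, ?_⟩
  · intro a ha
    simp only [Finset.coe_image, mem_image] at ha
    obtain ⟨k, -, rfl⟩ := ha
    exact ⟨k, rfl⟩
  · simpa using hn

theorem caps_lemma {N : ℕ} (V U : Set (EN N)) (hV : StrictlyConvexDomain V)
    (hU : IsDomainSet U) (hUV : (U ∩ frontier V).Nonempty) (ε : ℝ) (hε : 0 < ε) :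
    ∃ (n : ℕ) (Γ : Fin n → Set (EN N)),
      (∀ i, IsClosedCap V (Γ i) ∧ Γ i ⊆ U ∩ closure V) ∧
      (∀ i j, i ≠ j → Disjoint (Γ i) (Γ j)) ∧
      (Measure.hausdorffMeasure (2 * (N:ℝ) - 1) : Measure (EN N))
        ((U ∩ frontier V) \ ⋃ i, Γ i) < ENNReal.ofReal ε ∧
      ∀ K : Set (EN N), IsCompact K → PolynomiallyConvex K → K ⊆ V →
        Disjoint (⋃ i, Γ i) K → PolynomiallyConvex ((⋃ i, Γ i) ∪ K) := by
  classical
  obtain ⟨hDom, hbdd, hconv, ρ, W, ⟨hWo, hVW, hcd, hVeq, hne⟩, hp⟩ := hV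
  have hVo : IsOpen V := hDom.1
  have hUo : IsOpen U := hU.1
  obtain ⟨x1, hx1U, hx1⟩ := hUV
  obtain ⟨p0, hp0⟩ : V.Nonempty := closure_nonempty_iff.1 ⟨x1, frontier_subset_closure hx1⟩
  obtain ⟨r0, hr0, hb⟩ := Metric.isOpen_iff.1 hVo p0 hp0
  obtain ⟨M0, hM0⟩ := hbdd.closure.subset_closedBall p0
  set M := max M0 1 with hMdef
  have hM : closure V ⊆ closedBall p0 M := hM0.trans (closedBall_subset_closedBall (le_max_left _ _))
  have hMpos : 0 < M := lt_max_of_lt_right one_pos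
  have hN : 1 ≤ N := by
    rcases Nat.eq_zero_or_pos N with rfl | h
    · exfalso
      rw [hVo.frontier_eq] at hx1
      apply hx1.2
      have : x1 = p0 := Subsingleton.elim _ _
      rwa [this]
    · exact h
  set d := 2 * N - 1 with hd
  have hfr : Module.finrank ℝ (EN N) = d + 1 := by
    have : Module.finrank ℝ (EuclideanSpace ℂ (Fin N)) = 2 * N := by
      rw [← Module.finrank_mul_finrank ℝ ℂ (EuclideanSpace ℂ (Fin N)), Complex.finrank_real_complex,
        finrank_euclideanSpace_fin]
    change Module.finrank ℝ (EuclideanSpace ℂ (Fin N)) = d + 1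
    omega
  have hdr : (2 * (N:ℝ) - 1) = (d:ℝ) := by
    rw [hd, Nat.cast_sub (by omega)]; push_cast; ring
  rw [hdr]
  obtain ⟨c, hc, C, hC, δ, hδ, hq⟩ := global_quad (p0 := p0) hconv hMpos hM hVo hWo hVW hcd hVeq hp
  obtain ⟨θ, hθ0, hθ1, hθ2⟩ : ∃ θ > 0, θ ≤ 1 ∧ C * θ ^ 2 < c := by
    refine ⟨min 1 (c / (2 * C)), by positivity, min_le_left _ _, ?_⟩
    set m := min 1 (c / (2 * C))
    have hm0 : 0 < m := by positivity
    have hm1 : m ≤ 1 := min_le_left _ _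
    have hm2 : m ≤ c / (2 * C) := min_le_right _ _
    rw [le_div_iff₀ (by positivity)] at hm2
    have : m ^ 2 ≤ m := by nlinarith
    nlinarith
  obtain ⟨Cd, hCd⟩ := frontier_doubling hVo hconv hr0 hMpos hb hM hfr hθ0 hθ1
  have hfin := frontier_finite hVo hconv hr0 hMpos hb hM hfr
  set μ : Measure (EN N) :=
    (Measure.hausdorffMeasure (d:ℝ) : Measure (EN N)).restrict (frontier V) with hμ
  have hμfin : IsFiniteMeasure μ := ⟨by rw [hμ, Measure.restrict_apply_univ]; exact hfin⟩
  -- the caps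
  set O : EN N × ℝ → Set (EN N) := fun a =>
    V ∩ {z | fderiv ℝ ρ a.1 a.1 - c * a.2 ^ 2 < fderiv ℝ ρ a.1 z} with hO
  set B : EN N × ℝ → Set (EN N) := fun a => closure (O a) with hB
  set t : Set (EN N × ℝ) := {a | a.1 ∈ frontier V ∧ 0 < a.2 ∧ a.2 ≤ r0 / 12 ∧ a.2 < δ ∧
    closedBall a.1 a.2 ⊆ U} with ht
  have hOo : ∀ a, IsOpen (O a) := fun a =>
    hVo.inter (isOpen_lt continuous_const (fderiv ℝ ρ a.1).continuous)
  have hBball : ∀ a ∈ t, B a ⊆ closedBall a.1 a.2 := by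
    rintro ⟨x, r⟩ ⟨hx, hr, -, -, -⟩
    apply closure_minimal _ isClosed_closedBall
    rintro z ⟨hzV, hz⟩
    simp only [mem_ofPred_eq] at hz
    have h1 := (hq x hx z (subset_closure hzV)).1
    rw [map_sub] at h1
    simp only at hr
    rw [mem_closedBall, dist_eq_norm]
    have h2 : c * ‖z - x‖ ^ 2 ≤ c * r ^ 2 := by linarith
    exact le_of_sq_le_sq (le_of_mul_le_mul_left h2 hc) hr.le
  have hBsub : ∀ a ∈ t, frontier V ∩ closedBall a.1 (θ * a.2) ⊆ B a := by
    rintro ⟨x, r⟩ ⟨hx, hr, -, hrδ, -⟩ z ⟨hz, hzx⟩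
    simp only at hx hr hrδ hzx
    rw [mem_closedBall, dist_eq_norm] at hzx
    have hzx' : ‖z - x‖ < δ := by nlinarith
    have h1 := (hq x hx z (frontier_subset_closure hz)).2 hz hzx'
    rw [map_sub] at h1
    have h2 : C * ‖z - x‖ ^ 2 ≤ C * (θ * r) ^ 2 := by gcongr
    have h3 : C * (θ * r) ^ 2 < c * r ^ 2 := by
      have : 0 < r ^ 2 := by positivity
      nlinarith
    simp only [hB, hO]
    rw [inter_comm]
    apply (isOpen_lt continuous_const (fderiv ℝ ρ x).continuous).inter_closure
    refine ⟨?_, frontier_subset_closure hz⟩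
    simp only [mem_ofPred_eq]
    linarith
  have hOne : ∀ a ∈ t, (O a).Nonempty := by
    intro a ha
    apply closure_nonempty_iff.1
    refine ⟨a.1, hBsub a ha ⟨ha.1, ?_⟩⟩
    exact mem_closedBall_self (mul_nonneg hθ0.le ha.2.1.le)
  have hVit := Vitali.exists_disjoint_covering_ae μ (U ∩ frontier V) t Cd (fun a => a.2)
    (fun a => a.1) B hBball
    (by
      intro a ha
      rw [hμ, Measure.restrict_apply measurableSet_closedBall,
        Measure.restrict_apply isClosed_closure.measurableSet, inter_comm]
      refine (hCd a.1 ha.1 a.2 ha.2.1 ha.2.2.1).1.trans ?_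
      exact mul_le_mul' le_rfl (measure_mono (subset_inter (hBsub a ha) inter_subset_left)))
    (fun a ha => (hOne a ha).mono (interior_maximal subset_closure (hOo a)))
    (fun a _ => isClosed_closure)
    (by
      rintro x ⟨hxU, hx⟩ e he
      obtain ⟨s, hs, hsU⟩ := Metric.isOpen_iff.1 hUo x hxU
      refine ⟨(x, min (min e (s/2)) (min (r0/12) (δ/2))), ⟨hx, by positivity, ?_, ?_, ?_⟩, ?_, rfl⟩
      · exact (min_le_right _ _).trans (min_le_left _ _)
      · exact ((min_le_right _ _).trans (min_le_right _ _)).trans_lt (by linarith)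
      · refine (closedBall_subset_ball ?_).trans hsU
        exact ((min_le_left _ _).trans (min_le_right _ _)).trans_lt (by linarith)
      · exact (min_le_left _ _).trans (min_le_left _ _))
  obtain ⟨u, hut, huc, hud, hu0⟩ := hVit
  have hsm : MeasurableSet (U ∩ frontier V) := hUo.measurableSet.inter isClosed_frontier.measurableSet
  obtain ⟨F, hFu, hFε⟩ := finite_subfamily μ hsm B huc (fun a _ => isClosed_closure.measurableSet)
    hu0 (ENNReal.ofReal_pos.2 hε)
  set g : Fin F.card → EN N × ℝ := fun i => (F.equivFin.symm i : EN N × ℝ) with hg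
  have hgF : ∀ i, g i ∈ F := fun i => (F.equivFin.symm i).2
  have hgt : ∀ i, g i ∈ t := fun i => hut (hFu (hgF i))
  have hgi : Function.Injective g := Subtype.val_injective.comp F.equivFin.symm.injective
  have hgU : ⋃ i, B (g i) = ⋃ a ∈ F, B a := by
    ext z
    simp only [mem_iUnion]
    constructor
    · rintro ⟨i, hi⟩
      exact ⟨g i, hgF i, hi⟩
    · rintro ⟨a, ha, hz⟩
      refine ⟨F.equivFin ⟨a, ha⟩, ?_⟩
      simpa [hg] using hz
  have hcap : ∀ i, IsClosedCap V (B (g i)) := fun i =>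
    ⟨fderiv ℝ ρ (g i).1, _, hne _ (hgt i).1, hOne _ (hgt i), rfl⟩
  have hdisj : ∀ i j, i ≠ j → Disjoint (B (g i)) (B (g j)) := fun i j hij =>
    hud (hFu (hgF i)) (hFu (hgF j)) (fun h => hij (hgi h))
  refine ⟨F.card, fun i => B (g i), fun i => ⟨hcap i, ?_⟩, hdisj, ?_, ?_⟩
  · exact subset_inter ((hBball _ (hgt i)).trans (hgt i).2.2.2.2) (closure_mono inter_subset_left)
  · rw [hgU]
    rw [hμ, Measure.restrict_apply (hsm.diff (Finset.measurableSet_biUnion _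
      fun a _ => isClosed_closure.measurableSet))] at hFε
    refine (measure_mono ?_).trans_lt hFε
    exact subset_inter subset_rfl (fun z hz => hz.1.2)
  · intro K hK hKp hKV hKd
    exact caps_polyConvex hVo hconv hbdd _ hcap hdisj K hK hKp hKV hKd
end

section
/- Let {γ_z : z ∈ 𝔹_N} be a family of maps as in the Theorem on H_v^0 (each γ_z : b𝔹_N × [0,1] → cl(𝔹_N) is C¹, maps into 𝔹_N for r < 1, γ_z(x,1) = x with transversal approach, satisfies (†), with joint continuity in z). Let L be a compact subset of 𝔹_N and let h be a continuous function on 𝔹_N having a K-limit at almost every point of b𝔹_N. Then for every ε > 0 there exist a set E ⊆ b𝔹_N with m(b𝔹_N \ E) < ε and an extension h̃ of h to 𝔹_N ∪ E such that h̃ is continuous on E_L^* := {γ_z(x,r) : x ∈ E, r ∈ [0,1], z ∈ L}. -/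
open Set Filter Topology Metric MeasureTheory
open scoped ENNReal NNReal InnerProductSpace ComplexConjugate

/-- Local bound at an interior parameter or at `r = 1`, glued by compactness. -/
lemma koranyi_bound {N : ℕ} (γ : EN N → EN N × ℝ → EN N)
    (hγ : BallGammaFamily γ) (L : Set (EN N)) (hL : IsCompact L)
    (hLb : L ⊆ Metric.ball (0:EN N) 1) (x : EN N) (hx : x ∈ Metric.sphere (0:EN N) 1) :
    ∃ k : ℕ, ∀ z ∈ L, ∀ r ∈ Icc (0:ℝ) 1,
      ‖1 - (⟪x, γ z (x, r)⟫_ℂ : ℂ)‖ ≤ k * (1 - ‖γ z (x, r)‖ ^ 2) := by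
  obtain ⟨h1, h2, h3⟩ := hγ
  have hfr : frontier (Metric.ball (0:EN N) 1) = Metric.sphere 0 1 :=
    frontier_ball _ one_ne_zero
  have hxn : ‖x‖ = 1 := by simpa using hx
  have hxx : (⟪x, x⟫_ℂ : ℂ) = 1 := by
    rw [inner_self_eq_norm_sq_to_K, hxn]; simp
  have hle : ∀ z ∈ L, ∀ r ∈ Icc (0:ℝ) 1, ‖γ z (x, r)‖ ≤ 1 := by
    intro z hz r hr
    obtain ⟨-, hin, hone, -⟩ := (h1 z (hLb hz)).1
    rw [hfr] at hin hone
    rcases eq_or_lt_of_le hr.2 with h | h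
    · rw [h, hone x hx, hxn]
    · have := hin x hx r ⟨hr.1, h⟩
      rw [mem_ball_zero_iff] at this; exact this.le
  have hγc : ContinuousOn (fun p : EN N × ℝ => γ p.1 (x, p.2)) (L ×ˢ Icc (0:ℝ) 1) := by
    have : ContinuousOn (fun p : EN N × ℝ => ((p.1, (x, p.2)) : EN N × (EN N × ℝ)))
        (L ×ˢ Icc (0:ℝ) 1) := by fun_prop
    exact h2.comp this (fun p hp => ⟨hLb hp.1, hx, hp.2⟩)
  have hvc := (h3 x hx).mono (prod_mono_left (t := Icc (0:ℝ) 1) hLb)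
  suffices H : ∃ k : ℕ, ∀ p ∈ L ×ˢ Icc (0:ℝ) 1,
      ‖1 - (⟪x, γ p.1 (x, p.2)⟫_ℂ : ℂ)‖ ≤ k * (1 - ‖γ p.1 (x, p.2)‖ ^ 2) by
    obtain ⟨k, hk⟩ := H
    exact ⟨k, fun z hz r hr => hk (z, r) ⟨hz, hr⟩⟩
  have hpos : ∀ p ∈ L ×ˢ Icc (0:ℝ) 1, 0 ≤ 1 - ‖γ p.1 (x, p.2)‖ ^ 2 := by
    intro p hp
    have := hle p.1 hp.1 p.2 hp.2
    nlinarith [norm_nonneg (γ p.1 (x, p.2))]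
  have hmono : ∀ (k l : ℕ), k ≤ l → ∀ p ∈ L ×ˢ Icc (0:ℝ) 1,
      ‖1 - (⟪x, γ p.1 (x, p.2)⟫_ℂ : ℂ)‖ ≤ k * (1 - ‖γ p.1 (x, p.2)‖ ^ 2) →
      ‖1 - (⟪x, γ p.1 (x, p.2)⟫_ℂ : ℂ)‖ ≤ l * (1 - ‖γ p.1 (x, p.2)‖ ^ 2) := by
    intro k l hkl p hp h
    refine h.trans (mul_le_mul_of_nonneg_right (by exact_mod_cast hkl) (hpos p hp))
  have hK : IsCompact (L ×ˢ Icc (0:ℝ) 1) := hL.prod isCompact_Icc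
  have hsub : ∃ k : ℕ, ∀ p ∈ L ×ˢ Icc (0:ℝ) 1, p ∈ L ×ˢ Icc (0:ℝ) 1 →
      ‖1 - (⟪x, γ p.1 (x, p.2)⟫_ℂ : ℂ)‖ ≤ k * (1 - ‖γ p.1 (x, p.2)‖ ^ 2) := by
    refine hK.induction_on (p := fun s => ∃ k : ℕ, ∀ p ∈ s, p ∈ L ×ˢ Icc (0:ℝ) 1 →
      ‖1 - (⟪x, γ p.1 (x, p.2)⟫_ℂ : ℂ)‖ ≤ k * (1 - ‖γ p.1 (x, p.2)‖ ^ 2)) ?_ ?_ ?_ ?_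
    · exact ⟨0, by simp⟩
    · rintro s t hst ⟨k, hk⟩
      exact ⟨k, fun p hp => hk p (hst hp)⟩
    · rintro s t ⟨k, hk⟩ ⟨l, hl⟩
      refine ⟨max k l, fun p hp hp' => ?_⟩
      rcases hp with hp | hp
      · exact hmono k _ (le_max_left _ _) p hp' (hk p hp hp')
      · exact hmono l _ (le_max_right _ _) p hp' (hl p hp hp')
    rintro ⟨z₀, r₀⟩ ⟨hz₀, hr₀⟩
    obtain ⟨hsm, hin, hone, htr⟩ := (h1 z₀ (hLb hz₀)).1
    rw [hfr] at hin hone htr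
    rcases lt_or_eq_of_le hr₀.2 with hlt | heq
    · -- interior parameter
      have hb := hin x hx r₀ ⟨hr₀.1, hlt⟩
      rw [mem_ball_zero_iff] at hb
      set c := 1 - ‖γ z₀ (x, r₀)‖ ^ 2 with hc
      have hcpos : 0 < c := by nlinarith [norm_nonneg (γ z₀ (x, r₀))]
      have hcont : ContinuousWithinAt (fun p : EN N × ℝ => 1 - ‖γ p.1 (x, p.2)‖ ^ 2)
          (L ×ˢ Icc (0:ℝ) 1) (z₀, r₀) :=
        continuousWithinAt_const.sub ((hγc (z₀, r₀) ⟨hz₀, hr₀⟩).norm.pow 2)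
      have hev := hcont.eventually (lt_mem_nhds (show c / 2 < c by linarith))
      refine ⟨_, hev, ⌈4 / c⌉₊, fun p hp hp' => ?_⟩
      have hp2 : c / 2 < 1 - ‖γ p.1 (x, p.2)‖ ^ 2 := hp
      have hk : 4 / c ≤ ⌈4 / c⌉₊ := Nat.le_ceil _
      have hn : ‖1 - (⟪x, γ p.1 (x, p.2)⟫_ℂ : ℂ)‖ ≤ 2 := by
        have h1 := norm_sub_le (1:ℂ) (⟪x, γ p.1 (x, p.2)⟫_ℂ : ℂ)
        have h2 := norm_inner_le_norm (𝕜 := ℂ) x (γ p.1 (x, p.2))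
        have h3 := hle p.1 hp'.1 p.2 hp'.2
        rw [hxn] at h2
        rw [norm_one] at h1
        linarith
      calc _ ≤ (2:ℝ) := hn
        _ = 4 / c * (c / 2) := by field_simp; norm_num
        _ ≤ _ := by gcongr
    · -- boundary parameter
      subst heq
      set v : EN N × ℝ → EN N :=
        fun p => derivWithin (fun r => γ p.1 (x, r)) (Icc (0:ℝ) 1) p.2 with hv
      have hder : ∀ z ∈ L, ∀ r ∈ Icc (0:ℝ) 1,
          HasDerivWithinAt (fun r => γ z (x, r)) (v (z, r)) (Icc (0:ℝ) 1) r := by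
        intro z hz r hr
        have hs := (h1 z (hLb hz)).1.1
        rw [hfr] at hs
        have hd : DifferentiableOn ℝ (γ z) (Metric.sphere 0 1 ×ˢ Icc (0:ℝ) 1) :=
          hs.differentiableOn (by simp)
        have hd2 : DifferentiableOn ℝ (fun r : ℝ => γ z (x, r)) (Icc (0:ℝ) 1) := by
          refine hd.comp (f := fun r : ℝ => ((x, r) : EN N × ℝ)) (by fun_prop) (fun r hr => ⟨hx, hr⟩)
        exact (hd2 r hr).hasDerivWithinAt
      have hder2 : ∀ z ∈ L, ∀ r ∈ Icc (0:ℝ) 1,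
          HasDerivWithinAt (fun r => ‖γ z (x, r)‖ ^ 2)
            (2 * inner ℝ (γ z (x, r)) (v (z, r))) (Icc (0:ℝ) 1) r :=
        fun z hz r hr => (hder z hz r hr).norm_sq
      have hγ1 : γ z₀ (x, 1) = x := hone x hx
      have hne : (2 * inner ℝ x (v (z₀, 1)) : ℝ) ≠ 0 := by
        have := htr x hx
        have hf : HasFDerivAt (ballRho (N := N)) (2 • (innerSL ℝ x)) x := by
          have := (hasStrictFDerivAt_norm_sq x).hasFDerivAt
          exact this.sub_const 1
        rw [hf.fderiv] at this
        simpa [hv] using this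
      have hnn : (0:ℝ) ≤ 2 * inner ℝ x (v (z₀, 1)) := by
        have h := hder2 z₀ hz₀ 1 hr₀
        rw [hγ1] at h
        rw [hasDerivWithinAt_iff_tendsto_slope] at h
        have : (𝓝[Icc (0:ℝ) 1 \ {1}] (1:ℝ)).NeBot := by
          rw [show Icc (0:ℝ) 1 \ {1} = Ico 0 1 from Icc_sdiff_right]
          exact right_nhdsWithin_Ico_neBot (by norm_num)
        refine ge_of_tendsto h ?_
        filter_upwards [self_mem_nhdsWithin] with r hr
        rw [slope_def_field]
        have h5 : ‖γ z₀ (x, r)‖ ≤ 1 := hle z₀ hz₀ r hr.1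
        apply div_nonneg_of_nonpos
        · simp only [hγ1, hxn]
          nlinarith [norm_nonneg (γ z₀ (x, r))]
        · linarith [hr.1.2]
      have hcpos := lt_of_le_of_ne hnn (Ne.symm hne)
      set c : ℝ := 2 * inner ℝ x (v (z₀, 1)) with hc
      set M : ℝ := ‖v (z₀, 1)‖ + 1 with hM
      have hvat : ContinuousWithinAt v (L ×ˢ Icc (0:ℝ) 1) (z₀, 1) := hvc _ ⟨hz₀, hr₀⟩
      have hcont : ContinuousWithinAt
          (fun p : EN N × ℝ => (2 * inner ℝ (γ p.1 (x, p.2)) (v p) : ℝ))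
          (L ×ˢ Icc (0:ℝ) 1) (z₀, 1) :=
        continuousWithinAt_const.mul (ContinuousWithinAt.inner (𝕜 := ℝ) (hγc (z₀, 1) ⟨hz₀, hr₀⟩) hvat)
      have e1 := hcont.eventually (lt_mem_nhds (a := c / 2) (by
        simp only [hγ1]; rw [← hc]; linarith))
      have e2 := hvat.norm.eventually (gt_mem_nhds (show ‖v (z₀, 1)‖ < M by rw [hM]; linarith))
      have e3 := e1.and e2
      rw [Metric.nhdsWithin_basis_ball.eventually_iff] at e3
      obtain ⟨δ, hδ, e3⟩ := e3
      refine ⟨Metric.ball (z₀, 1) δ ∩ L ×ˢ Icc (0:ℝ) 1, 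
        Filter.inter_mem (mem_nhdsWithin_of_mem_nhds (Metric.ball_mem_nhds _ hδ)) self_mem_nhdsWithin, ⌈M / (c / 2)⌉₊, ?_⟩
      rintro ⟨z, r⟩ ⟨hp, -⟩ ⟨hz, hr⟩
      have hz1 := (h1 z (hLb hz)).1.2.2.1
      rw [hfr] at hz1
      have hzx := hz1 x hx
      simp only at hz hr ⊢
      rw [← ball_prod_same] at hp
      have hrs : ∀ s ∈ Icc r 1, s ∈ Icc (0:ℝ) 1 := fun s hs => ⟨hr.1.trans hs.1, hs.2⟩
      have hball : ∀ s ∈ Icc r 1, (z, s) ∈ Metric.ball (z₀, (1:ℝ)) δ ∩ L ×ˢ Icc (0:ℝ) 1 := by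
        intro s hs
        refine ⟨?_, hz, hrs s hs⟩
        rw [← ball_prod_same]
        refine ⟨hp.1, ?_⟩
        have := hp.2
        simp only [Metric.mem_ball, Real.dist_eq, abs_lt] at this ⊢
        constructor <;> linarith [hs.1, hs.2]
      have b1 : ‖γ z (x, 1) - γ z (x, r)‖ ≤ M * ‖(1:ℝ) - r‖ := by
        refine (convex_Icc r 1).norm_image_sub_le_of_norm_hasDerivWithin_le
          (f := fun s => γ z (x, s)) (f' := fun s => v (z, s))
          (fun s hs => (hder z hz s (hrs s hs)).mono hrs) ?_ (left_mem_Icc.2 hr.2)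
          (right_mem_Icc.2 hr.2)
        intro s hs
        exact (e3 (hball s hs)).2.le
      have b2 : c / 2 * (1 - r) ≤ ‖γ z (x, 1)‖ ^ 2 - ‖γ z (x, r)‖ ^ 2 := by
        have hd : ∀ s ∈ interior (Icc r 1), HasDerivAt (fun r => ‖γ z (x, r)‖ ^ 2)
            (2 * inner ℝ (γ z (x, s)) (v (z, s))) s := by
          intro s hs
          have hs' := interior_subset hs
          refine ((hder2 z hz s (hrs s hs')).mono hrs).hasDerivAt ?_
          exact mem_interior_iff_mem_nhds.1 hs
        refine (convex_Icc r 1).mul_sub_le_image_sub_of_le_deriv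
          (f := fun s => ‖γ z (x, s)‖ ^ 2) ?_ ?_ ?_ r (left_mem_Icc.2 hr.2) 1
          (right_mem_Icc.2 hr.2) hr.2
        · exact fun s hs => ((hder2 z hz s (hrs s hs)).mono hrs).continuousWithinAt
        · exact fun s hs => (hd s hs).differentiableAt.differentiableWithinAt
        · intro s hs
          rw [(hd s hs).deriv]
          exact (e3 (hball s (interior_subset hs))).1.le
      rw [hzx] at b1 b2
      rw [hxn] at b2
      rw [Real.norm_of_nonneg (by linarith [hr.2])] at b1
      have hk : M / (c / 2) ≤ ⌈M / (c / 2)⌉₊ := Nat.le_ceil _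
      have hM0 : 0 < M := by positivity
      calc ‖1 - (⟪x, γ z (x, r)⟫_ℂ : ℂ)‖ = ‖(⟪x, x - γ z (x, r)⟫_ℂ : ℂ)‖ := by
            rw [inner_sub_right, hxx]
        _ ≤ ‖x‖ * ‖x - γ z (x, r)‖ := norm_inner_le_norm _ _
        _ ≤ M * (1 - r) := by rw [hxn, one_mul]; exact b1
        _ = M / (c / 2) * (c / 2 * (1 - r)) := by field_simp
        _ ≤ ⌈M / (c / 2)⌉₊ * (1 - ‖γ z (x, r)‖ ^ 2) := by
            gcongr
            · have : 0 ≤ 1 - r := by linarith [hr.2]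
              positivity
            · linarith
  obtain ⟨k, hk⟩ := hsub
  exact ⟨k, fun p hp => hk p hp hp⟩

lemma klimit_cauchy {N : ℕ} (h : EN N → ℂ) (x : EN N) (hK : HasKLimitAt h x)
    (α : ℝ) (hα : 1 < α) (δ : ℝ) (hδ : 0 < δ) :
    ∃ n : ℕ, ∀ z ∈ Koranyi α x, ∀ w ∈ Koranyi α x, dist z x < 1 / ((n:ℝ) + 1) →
      dist w x < 1 / ((n:ℝ) + 1) → dist (h z) (h w) ≤ δ := by
  by_contra! hcon
  choose z hz w hw hzx hwx hd using hcon
  obtain ⟨c, hc⟩ := hK α hα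
  have t0 := tendsto_one_div_add_atTop_nhds_zero_nat (𝕜 := ℝ)
  have tz : Tendsto z atTop (𝓝 x) := tendsto_iff_dist_tendsto_zero.2
    (squeeze_zero (fun _ => dist_nonneg) (fun n => (hzx n).le) t0)
  have tw : Tendsto w atTop (𝓝 x) := tendsto_iff_dist_tendsto_zero.2
    (squeeze_zero (fun _ => dist_nonneg) (fun n => (hwx n).le) t0)
  have := (hc z hz tz).dist (hc w hw tw)
  rw [dist_self] at this
  have h2 := ge_of_tendsto' this (fun n => (hd n).le)
  linarith

/-- From an increasing sequence of closed sets covering almost all of the sphere, one has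
small complement. -/
lemma exists_small {N : ℕ} (G : ℕ → Set (EN N)) (hG : ∀ n, IsClosed (G n)) (hm : Monotone G)
    (hc : ∀ᵐ x ∂ sphMeasure N, x ∈ Metric.sphere (0:EN N) 1 → ∃ n, x ∈ G n)
    (ε : ℝ≥0∞) (hε : 0 < ε) :
    ∃ n, sphMeasure N (Metric.sphere (0:EN N) 1 \ G n) < ε := by
  have hfin : sphMeasure N univ ≤ 1 := by
    simp only [sphMeasure, Measure.smul_apply, smul_eq_mul, Measure.restrict_apply_univ]
    exact ENNReal.inv_mul_le_one _
  have ht := tendsto_measure_iInter_atTop (μ := sphMeasure N)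
    (s := fun n => Metric.sphere (0:EN N) 1 \ G n)
    (fun n => (isClosed_sphere.measurableSet.diff (hG n).measurableSet).nullMeasurableSet)
    (fun a b hab => sdiff_subset_sdiff_right (hm hab))
    ⟨0, ((measure_mono (subset_univ _)).trans hfin).trans_lt ENNReal.one_lt_top |>.ne⟩
  have h0 : sphMeasure N (⋂ n, Metric.sphere (0:EN N) 1 \ G n) = 0 := by
    refine measure_mono_null ?_ hc
    intro x hx
    simp only [mem_iInter, Set.mem_sdiff] at hx
    simp only [mem_compl_iff, mem_ofPred_eq, Classical.not_imp, not_exists]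
    exact ⟨(hx 0).1, fun n => (hx n).2⟩
  rw [h0] at ht
  exact (ht.eventually (gt_mem_nhds hε)).exists

lemma isClosed_osc {N : ℕ} (h : EN N → ℂ) (α d δ : ℝ) :
    IsClosed {x : EN N | ∀ z ∈ Koranyi α x, ∀ w ∈ Koranyi α x, dist z x < d →
      dist w x < d → dist (h z) (h w) ≤ δ} := by
  have ho : ∀ z : EN N, IsOpen {x : EN N | z ∈ Koranyi α x} := by
    intro z
    have h1 : IsOpen {x : EN N | ‖1 - (⟪x, z⟫_ℂ : ℂ)‖ < α / 2 * (1 - ‖z‖ ^ 2)} :=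
      isOpen_lt (by fun_prop) continuous_const
    exact IsOpen.inter (isOpen_const (p := z ∈ Metric.ball (0:EN N) 1)) h1
  have hd : ∀ z : EN N, IsOpen {x : EN N | dist z x < d} := fun z =>
    isOpen_lt (by fun_prop) continuous_const
  have e : {x : EN N | ∀ z ∈ Koranyi α x, ∀ w ∈ Koranyi α x, dist z x < d →
      dist w x < d → dist (h z) (h w) ≤ δ} =
      ⋂ z : EN N, ⋂ w : EN N, ⋂ (_ : ¬ dist (h z) (h w) ≤ δ), ({x : EN N | z ∈ Koranyi α x} ∩
        {x : EN N | w ∈ Koranyi α x} ∩ {x : EN N | dist z x < d} ∩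
        {x : EN N | dist w x < d})ᶜ := by
    ext x
    simp only [mem_iInter, mem_ofPred_eq, mem_compl_iff, mem_inter_iff]
    grind
  rw [e]
  exact isClosed_iInter fun z => isClosed_iInter fun w => isClosed_iInter fun _ =>
      ((((ho z).inter (ho w)).inter (hd z)).inter (hd w)).isClosed_compl

/-- **Extension lemma.** Let `{γ_z}` be a family of maps as above, `L ⊆ 𝔹_N` compact, and
`h` continuous on `𝔹_N` with a `K`-limit at almost every point of `b𝔹_N`. Then for every
`ε > 0` there are `E ⊆ b𝔹_N` with `m(b𝔹_N \ E) < ε` and an extension `h̃` of `h` to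
`𝔹_N ∪ E` that is continuous on `E_L^* = {γ_z(x,r) : x ∈ E, r ∈ [0,1], z ∈ L}`. -/
theorem klimit_extension {N : ℕ} (hN : 2 ≤ N) (γ : EN N → EN N × ℝ → EN N)
    (hγ : BallGammaFamily γ)
    (L : Set (EN N)) (hL : IsCompact L) (hLb : L ⊆ Metric.ball (0:EN N) 1)
    (h : EN N → ℂ) (hh : ContinuousOn h (Metric.ball 0 1))
    (hKlim : ∀ᵐ x ∂ sphMeasure N, HasKLimitAt h x) (ε : ℝ) (hε : 0 < ε) :
    ∃ E ⊆ Metric.sphere (0:EN N) 1,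
      sphMeasure N (Metric.sphere (0:EN N) 1 \ E) < ENNReal.ofReal ε ∧
      ∃ ht : EN N → ℂ, (∀ z ∈ Metric.ball (0:EN N) 1, ht z = h z) ∧
        ContinuousOn ht (EStarSet γ L E) := by
  obtain ⟨h1, h2, h3⟩ := id hγ
  have hfr : frontier (Metric.ball (0:EN N) 1) = Metric.sphere 0 1 :=
    frontier_ball _ one_ne_zero
  have hγ1 : ∀ z ∈ L, ∀ x ∈ Metric.sphere (0:EN N) 1, γ z (x, 1) = x := by
    intro z hz x hx
    have := (h1 z (hLb hz)).1.2.2.1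
    rw [hfr] at this
    exact this x hx
  have hle : ∀ z ∈ L, ∀ x ∈ Metric.sphere (0:EN N) 1, ∀ r ∈ Icc (0:ℝ) 1,
      ‖γ z (x, r)‖ ≤ 1 := by
    intro z hz x hx r hr
    have hin := (h1 z (hLb hz)).1.2.1
    rw [hfr] at hin
    rcases eq_or_lt_of_le hr.2 with h | h
    · rw [h, hγ1 z hz x hx]
      exact (mem_sphere_zero_iff_norm.1 hx).le
    · have := hin x hx r ⟨hr.1, h⟩
      rw [mem_ball_zero_iff] at this; exact this.le
  -- the sets on which the approach is uniformly nontangential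
  set A : ℕ → Set (EN N) := fun k => {x ∈ Metric.sphere (0:EN N) 1 | ∀ z ∈ L, ∀ r ∈ Icc (0:ℝ) 1,
      ‖1 - (⟪x, γ z (x, r)⟫_ℂ : ℂ)‖ ≤ k * (1 - ‖γ z (x, r)‖ ^ 2)} with hA
  have hAc : ∀ k, IsClosed (A k) := by
    intro k
    have e : A k = Metric.sphere (0:EN N) 1 ∩ ⋂ z ∈ L, ⋂ r ∈ Icc (0:ℝ) 1,
        {x ∈ Metric.sphere (0:EN N) 1 |
          ‖1 - (⟪x, γ z (x, r)⟫_ℂ : ℂ)‖ ≤ k * (1 - ‖γ z (x, r)‖ ^ 2)} := by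
      ext x
      simp only [hA, mem_ofPred_eq, mem_inter_iff, mem_iInter]
      grind
    rw [e]
    refine isClosed_sphere.inter (isClosed_biInter fun z hz => isClosed_biInter fun r hr => ?_)
    have hc : ContinuousOn (fun x : EN N => γ z (x, r)) (Metric.sphere (0:EN N) 1) := by
      have : ContinuousOn (fun x : EN N => ((z, (x, r)) : EN N × (EN N × ℝ)))
        (Metric.sphere (0:EN N) 1) := by fun_prop
      exact h2.comp this (fun p hp => ⟨hLb hz, hp, hr⟩)
    refine IsClosed.isClosed_le isClosed_sphere ?_ ?_
    · exact (continuousOn_const.sub (ContinuousOn.inner (𝕜 := ℂ) continuousOn_id hc)).norm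
    · exact continuousOn_const.mul (continuousOn_const.sub (hc.norm.pow 2))
  have hAm : Monotone A := by
    intro k l hkl x hx
    refine ⟨hx.1, fun z hz r hr => (hx.2 z hz r hr).trans ?_⟩
    have h5 := hle z hz x hx.1 r hr
    refine mul_le_mul_of_nonneg_right (by exact_mod_cast hkl) ?_
    nlinarith [norm_nonneg (γ z (x, r))]
  obtain ⟨ε', hε'0, hε'⟩ := ENNReal.exists_pos_sum_of_countable
    (ENNReal.ofReal_pos.2 (half_pos hε)).ne' ℕ
  obtain ⟨k, hk⟩ := exists_small A hAc hAm (Filter.Eventually.of_forall fun x hx => by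
    obtain ⟨k, hk⟩ := koranyi_bound γ hγ L hL hLb x hx
    exact ⟨k, hx, hk⟩) (ENNReal.ofReal (ε / 2)) (ENNReal.ofReal_pos.2 (half_pos hε))
  set α : ℝ := 2 * k + 4 with hα
  have hα1 : 1 < α := by
    have : (0:ℝ) ≤ k := Nat.cast_nonneg k
    rw [hα]; linarith
  set G : ℕ → ℕ → Set (EN N) := fun j n => {x : EN N | ∀ z ∈ Koranyi α x, ∀ w ∈ Koranyi α x,
    dist z x < 1 / ((n:ℝ) + 1) → dist w x < 1 / ((n:ℝ) + 1) →
    dist (h z) (h w) ≤ 1 / ((j:ℝ) + 1)} with hG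
  have hGex : ∀ j, ∃ n, sphMeasure N (Metric.sphere (0:EN N) 1 \ G j n) < ε' j := by
    intro j
    refine exists_small (G j) (fun n => isClosed_osc h α _ _) ?_ ?_ _
      (by exact_mod_cast hε'0 j)
    · intro a b hab x hx z hz w hw hzx hwx
      have : 1 / ((b:ℝ) + 1) ≤ 1 / ((a:ℝ) + 1) := by gcongr
      exact hx z hz w hw (hzx.trans_le this) (hwx.trans_le this)
    · filter_upwards [hKlim] with x hx _
      exact klimit_cauchy h x hx α hα1 _ (by positivity)
  choose n hn using hGex
  have hES : A k ∩ ⋂ j, G j (n j) ⊆ Metric.sphere (0:EN N) 1 := fun x hx => hx.1.1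
  refine ⟨A k ∩ ⋂ j, G j (n j), hES, ?_, ?_⟩
  · have hsub : Metric.sphere (0:EN N) 1 \ (A k ∩ ⋂ j, G j (n j)) ⊆
        (Metric.sphere (0:EN N) 1 \ A k) ∪ ⋃ j, (Metric.sphere (0:EN N) 1 \ G j (n j)) := by
      intro x hx
      by_cases hxA : x ∈ A k
      · right
        by_contra hno
        refine hx.2 ⟨hxA, mem_iInter.2 fun j => ?_⟩
        by_contra hj
        exact hno (mem_iUnion.2 ⟨j, hx.1, hj⟩)
      · exact Or.inl ⟨hx.1, hxA⟩
    calc _ ≤ sphMeasure N (Metric.sphere (0:EN N) 1 \ A k) +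
          ∑' j, sphMeasure N (Metric.sphere (0:EN N) 1 \ G j (n j)) :=
          (measure_mono hsub).trans ((measure_union_le _ _).trans
            (add_le_add le_rfl (measure_iUnion_le _)))
      _ < ENNReal.ofReal (ε / 2) + ENNReal.ofReal (ε / 2) := by
          refine ENNReal.add_lt_add hk (lt_of_le_of_lt ?_ hε')
          exact ENNReal.tsum_le_tsum fun j => (hn j).le
      _ = ENNReal.ofReal ε := by
          rw [← ENNReal.ofReal_add (by positivity) (by positivity), add_halves]
  -- radial points
  set E := A k ∩ ⋂ j, G j (n j) with hE
  have hrad : ∀ x ∈ Metric.sphere (0:EN N) 1, ∀ t ∈ Ioo (0:ℝ) 1,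
      (t : ℂ) • x ∈ Koranyi α x ∧ dist ((t : ℂ) • x) x = 1 - t := by
    intro x hx t ht
    have hxn : ‖x‖ = 1 := by simpa using hx
    have hxx : (⟪x, x⟫_ℂ : ℂ) = 1 := by
      rw [inner_self_eq_norm_sq_to_K, hxn]; simp
    have hn1 : ‖(t:ℂ) • x‖ = t := by
      rw [norm_smul, hxn, mul_one, Complex.norm_real, Real.norm_of_nonneg ht.1.le]
    have hn2 : ‖(1:ℂ) - t‖ = 1 - t := by
      rw [show (1:ℂ) - t = ((1 - t : ℝ) : ℂ) by push_cast; rfl, Complex.norm_real,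
        Real.norm_of_nonneg (by linarith [ht.2])]
    refine ⟨⟨?_, ?_⟩, ?_⟩
    · rw [mem_ball_zero_iff, hn1]; exact ht.2
    · rw [inner_smul_right, hxx, mul_one, hn1, hn2, hα]
      have h6 : 0 < 1 - t := by linarith [ht.2]
      have h7 : (0:ℝ) ≤ k := Nat.cast_nonneg k
      have h8 : 0 < t := ht.1
      have : (2 * (k:ℝ) + 4) / 2 * (1 - t ^ 2) = (1 - t) * ((k + 2) * (1 + t)) := by ring
      rw [this]
      have : 1 < ((k:ℝ) + 2) * (1 + t) := by nlinarith
      nlinarith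
    · rw [dist_comm, dist_eq_norm]
      have : x - (t:ℂ) • x = ((1:ℂ) - t) • x := by rw [sub_smul, one_smul]
      rw [this, norm_smul, hxn, mul_one, hn2]
  set tt : ℕ → ℝ := fun m => 1 - 1 / ((m:ℝ) + 2) with htt
  have httI : ∀ m, tt m ∈ Ioo (0:ℝ) 1 := by
    intro m
    have h0 : (0:ℝ) < 1 / ((m:ℝ) + 2) := by positivity
    have h1 : 1 / ((m:ℝ) + 2) < 1 := by
      rw [div_lt_one (by positivity)]
      have : (0:ℝ) ≤ m := Nat.cast_nonneg m
      linarith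
    constructor <;> simp only [htt] <;> linarith
  have httn : ∀ p m : ℕ, p ≤ m → 1 - tt m < 1 / ((p:ℝ) + 1) := by
    intro p m hpm
    simp only [htt]
    have : (p:ℝ) ≤ m := by exact_mod_cast hpm
    rw [sub_sub_cancel]
    apply one_div_lt_one_div_of_lt (by positivity) (by linarith)
  have hlim : ∀ x ∈ E, ∃ c, Tendsto (fun m => h ((tt m : ℂ) • x)) atTop (𝓝 c) := by
    intro x hx
    refine cauchySeq_tendsto_of_complete (Metric.cauchySeq_iff.2 fun δ hδ => ?_)
    obtain ⟨j, hj⟩ := exists_nat_one_div_lt hδ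
    refine ⟨n j, fun a ha b hb => lt_of_le_of_lt ?_ hj⟩
    have hxG := mem_iInter.1 hx.2 j
    obtain ⟨a1, a2⟩ := hrad x (hES hx) _ (httI a)
    obtain ⟨b1, b2⟩ := hrad x (hES hx) _ (httI b)
    exact hxG _ a1 _ b1 (by rw [a2]; exact httn _ _ ha) (by rw [b2]; exact httn _ _ hb)
  classical
  set ht : EN N → ℂ := fun x => if x ∈ Metric.ball (0:EN N) 1 then h x else
    limUnder atTop (fun m => h ((tt m : ℂ) • x)) with hht
  have htb : ∀ z ∈ Metric.ball (0:EN N) 1, ht z = h z := fun z hz => if_pos hz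
  have htE : ∀ x ∈ E, ∀ j, ∀ w ∈ Koranyi α x, dist w x < 1 / ((n j:ℝ) + 1) →
      dist (h w) (ht x) ≤ 1 / ((j:ℝ) + 1) := by
    intro x hx j w hw hwx
    have hnb : x ∉ Metric.ball (0:EN N) 1 := by
      have := mem_sphere_zero_iff_norm.1 (hES hx)
      rw [mem_ball_zero_iff, this]; exact lt_irrefl _
    have e : ht x = limUnder atTop (fun m => h ((tt m : ℂ) • x)) := if_neg hnb
    have hT := tendsto_nhds_limUnder (hlim x hx)
    rw [← e] at hT
    refine le_of_tendsto (tendsto_const_nhds.dist hT) ?_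
    filter_upwards [eventually_ge_atTop (n j)] with a ha
    obtain ⟨a1, a2⟩ := hrad x (hES hx) _ (httI a)
    exact mem_iInter.1 hx.2 j _ hw _ a1 hwx (by rw [a2]; exact httn _ _ ha)
  refine ⟨ht, htb, ?_⟩
  -- description of points of the star set
  have hstar : ∀ w ∈ EStarSet γ L E, ∃ x ∈ E, ‖w‖ ≤ 1 ∧
      ‖1 - (⟪x, w⟫_ℂ : ℂ)‖ ≤ k * (1 - ‖w‖ ^ 2) ∧ ‖w - x‖ ^ 2 ≤ 2 * k * (1 - ‖w‖ ^ 2) := by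
    rintro w ⟨z, hz, x, hx, r, hr, rfl⟩
    have hb := hx.1.2 z hz r hr
    have hl := hle z hz x (hES hx) r hr
    refine ⟨x, hx, hl, hb, ?_⟩
    set w := γ z (x, r)
    have hxn : ‖x‖ = 1 := mem_sphere_zero_iff_norm.1 (hES hx)
    have h5 : ‖w - x‖ ^ 2 = ‖w‖ ^ 2 - 2 * RCLike.re (⟪w, x⟫_ℂ : ℂ) + ‖x‖ ^ 2 :=
      norm_sub_sq (𝕜 := ℂ) w x
    rw [inner_re_symm, hxn] at h5
    have h6 : 1 - RCLike.re (⟪x, w⟫_ℂ : ℂ) ≤ ‖1 - (⟪x, w⟫_ℂ : ℂ)‖ := by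
      have := RCLike.re_le_norm (1 - (⟪x, w⟫_ℂ : ℂ))
      simpa using this
    nlinarith [norm_nonneg w]
  intro w₀ hw₀
  by_cases hwb : w₀ ∈ Metric.ball (0:EN N) 1
  · have hca : ContinuousAt h w₀ := hh.continuousAt (isOpen_ball.mem_nhds hwb)
    refine (hca.congr ?_).continuousWithinAt
    filter_upwards [isOpen_ball.mem_nhds hwb] with z hz using (htb z hz).symm
  obtain ⟨x₀, hx₀, hw1, -, hw3⟩ := hstar w₀ hw₀
  have hsph : ∀ w : EN N, ‖w‖ ≤ 1 → w ∉ Metric.ball (0:EN N) 1 → ‖w‖ = 1 := by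
    intro w h1 h2
    rw [mem_ball_zero_iff, not_lt] at h2
    exact le_antisymm h1 h2
  have hwx : w₀ = x₀ := by
    rw [hsph w₀ hw1 hwb] at hw3
    have : ‖w₀ - x₀‖ ^ 2 ≤ 0 := by simpa using hw3
    have : ‖w₀ - x₀‖ = 0 := by nlinarith [norm_nonneg (w₀ - x₀)]
    exact sub_eq_zero.1 (norm_eq_zero.1 this)
  subst hwx
  rw [Metric.continuousWithinAt_iff']
  intro e he
  obtain ⟨j, hj⟩ := exists_nat_one_div_lt (show 0 < e / 4 by positivity)
  set t := tt (n j)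
  have htI := httI (n j)
  -- continuity of the dilate
  have hdil : ContinuousAt (fun x : EN N => h ((t : ℂ) • x)) w₀ := by
    have hm : (t : ℂ) • w₀ ∈ Metric.ball (0:EN N) 1 := (hrad w₀ (hES hx₀) t htI).1.1
    have hca : ContinuousAt h ((t:ℂ) • w₀) := hh.continuousAt (isOpen_ball.mem_nhds hm)
    exact ContinuousAt.comp (f := fun x : EN N => (t:ℂ) • x) hca (by fun_prop)
  obtain ⟨δ, hδ, hdil⟩ := Metric.continuousAt_iff.1 hdil (e / 4) (by positivity)
  set η : ℝ := min (δ / 2) (1 / ((n j : ℝ) + 1)) with hη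
  have hη0 : 0 < η := lt_min (by positivity) (by positivity)
  have hw₀n : ‖w₀‖ = 1 := mem_sphere_zero_iff_norm.1 (hES hx₀)
  have hnear : ∀ᶠ w in 𝓝 w₀, 2 * k * (1 - ‖w‖ ^ 2) < η ^ 2 := by
    have hc : Continuous (fun w : EN N => 2 * (k:ℝ) * (1 - ‖w‖ ^ 2)) := by fun_prop
    refine hc.continuousAt.eventually (gt_mem_nhds ?_)
    simp only [hw₀n]
    simpa using pow_pos hη0 2
  filter_upwards [mem_nhdsWithin_of_mem_nhds hnear,
    mem_nhdsWithin_of_mem_nhds (Metric.ball_mem_nhds w₀ (half_pos hδ)), self_mem_nhdsWithin]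
    with w hwn hwd hwE
  obtain ⟨x, hx, hx1, hx2, hx3⟩ := hstar w hwE
  have hdx : dist w x < η := by
    rw [dist_eq_norm]
    exact lt_of_pow_lt_pow_left₀ 2 hη0.le (hx3.trans_lt hwn)
  have t1 : dist (ht w) (ht x) ≤ 1 / ((j:ℝ) + 1) := by
    by_cases hwB : w ∈ Metric.ball (0:EN N) 1
    · rw [htb w hwB]
      refine htE x hx j w ⟨hwB, hx2.trans_lt ?_⟩ (hdx.trans_le (min_le_right _ _))
      have : 0 < 1 - ‖w‖ ^ 2 := by
        rw [mem_ball_zero_iff] at hwB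
        nlinarith [norm_nonneg w]
      rw [hα]
      nlinarith
    · have : w = x := by
        rw [hsph w hx1 hwB] at hx3
        have h8 : ‖w - x‖ ^ 2 ≤ 0 := by simpa using hx3
        have : ‖w - x‖ = 0 := by nlinarith [norm_nonneg (w - x)]
        exact sub_eq_zero.1 (norm_eq_zero.1 this)
      rw [this, dist_self]; positivity
  have t2 : dist (h ((t:ℂ) • x)) (ht x) ≤ 1 / ((j:ℝ) + 1) := by
    obtain ⟨a1, a2⟩ := hrad x (hES hx) _ htI
    exact htE x hx j _ a1 (by rw [a2]; exact httn _ _ le_rfl)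
  have t3 : dist (h ((t:ℂ) • w₀)) (ht w₀) ≤ 1 / ((j:ℝ) + 1) := by
    obtain ⟨a1, a2⟩ := hrad w₀ (hES hx₀) _ htI
    exact htE w₀ hx₀ j _ a1 (by rw [a2]; exact httn _ _ le_rfl)
  have t4 : dist (h ((t:ℂ) • x)) (h ((t:ℂ) • w₀)) < e / 4 := by
    apply hdil
    have h9 := dist_triangle_left x w₀ w
    have h10 := hdx.trans_le (min_le_left _ _)
    have h11 := Metric.mem_ball.1 hwd
    linarith
  have s1 := dist_triangle (ht w) (ht x) (ht w₀)
  have s2 := dist_triangle_left (ht x) (ht w₀) (h ((t:ℂ) • x))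
  have s3 := dist_triangle (h ((t:ℂ) • x)) (h ((t:ℂ) • w₀)) (ht w₀)
  linarith
end

section
/- Let K and L be two compact convex subsets of ℂ^N whose intersection consists of a single point. Suppose there exists a complex-linear functional φ on ℂ^N such that Re φ ≤ 0 on K, Re φ ≥ 0 on L, and the set {z : Re φ(z) = 0} meets K only in a single point. Then K ∪ L is polynomially convex. -/
open Set Filter Topology Metric MeasureTheory
open scoped ENNReal NNReal InnerProductSpace ComplexConjugate

theorem kl_inv {X : Type*} [TopologicalSpace X] [CompactSpace X] (A : Subalgebra ℂ C(X, ℂ))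
    (hA : IsClosed (A : Set C(X, ℂ))) (g : C(X, ℂ)) (hg : g ∈ A)
    (hs : ∀ x, g x ∈ Complex.slitPlane) : ∃ k ∈ A, ∀ x, k x = (g x)⁻¹ := by
  have := hA
  have h0 : (0:ℂ) ∉ spectrum ℂ (⟨g, hg⟩ : A) := by
    intro h
    have hb := Subalgebra.spectrum_isBounded_connectedComponentIn A (⟨g, hg⟩ : A) h
    have hsub : (fun t : ℝ => (t : ℂ)) '' Iic 0 ⊆
        connectedComponentIn (spectrum ℂ ((⟨g, hg⟩ : A) : C(X, ℂ)))ᶜ 0 := by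
      apply IsPreconnected.subset_connectedComponentIn
      · exact isPreconnected_Iic.image _ Complex.continuous_ofReal.continuousOn
      · exact ⟨0, by simp, by simp⟩
      · rintro _ ⟨t, ht, rfl⟩
        rw [ContinuousMap.spectrum_eq_range]
        rintro ⟨x, hx⟩
        have h1 := hs x
        simp only at hx
        rw [hx, Complex.ofReal_mem_slitPlane] at h1
        exact absurd ht (not_le.2 h1)
    have hb2 := hb.subset hsub
    obtain ⟨R, hR⟩ := hb2.exists_norm_le
    have h3 := hR _ ⟨-(|R| + 1), by simp only [mem_Iic]; have := abs_nonneg R; linarith, rfl⟩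
    rw [Complex.norm_real, Real.norm_eq_abs, abs_neg] at h3
    have := le_abs_self R
    have := le_abs_self (|R| + 1)
    linarith
  rw [spectrum.zero_notMem_iff] at h0
  obtain ⟨u, hu⟩ := h0
  refine ⟨((u⁻¹ : Aˣ) : A), Subtype.property _, fun x => ?_⟩
  have h1 : (u : A) * ((u⁻¹ : Aˣ) : A) = 1 := u.mul_inv
  rw [hu] at h1
  have h2 := congrArg (fun f : A => (f : C(X, ℂ)) x) h1
  simp at h2
  exact eq_inv_of_mul_eq_one_right h2

theorem kl_log {X : Type*} [TopologicalSpace X] [CompactSpace X] (A : Subalgebra ℂ C(X, ℂ))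
    (hA : IsClosed (A : Set C(X, ℂ))) (g : C(X, ℂ)) (hg : g ∈ A)
    (hs : ∀ x, g x ∈ Complex.slitPlane) : ∃ k ∈ A, ∀ x, k x = Complex.log (g x) := by
  have hsl : ∀ (t : unitInterval) x, 1 + (t:ℝ) • (g x - 1) ∈ Complex.slitPlane := by
    intro t x
    apply StarConvex.add_smul_mem Complex.starConvex_one_slitPlane _ t.2.1 t.2.2
    simpa using hs x
  let J : C(unitInterval × X, ℂ) :=
    ⟨fun q => (1 + (q.1:ℝ) • (g q.2 - 1))⁻¹, by
      apply Continuous.inv₀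
      · fun_prop
      · intro q
        exact Complex.slitPlane_ne_zero (hsl q.1 q.2)⟩
  let Φ : C(unitInterval, C(X, ℂ)) := J.curry
  have hΦ : ∀ t x, Φ t x = (1 + (t:ℝ) • (g x - 1))⁻¹ := fun t x => rfl
  have hmem : ∀ t, Φ t ∈ A := by
    intro t
    obtain ⟨k, hk, hk2⟩ := kl_inv A hA (1 + ((t:ℝ):ℂ) • (g - 1))
      (A.add_mem A.one_mem (A.smul_mem (A.sub_mem hg A.one_mem) _)) (by
        intro x
        simpa using hsl t x)
    convert hk
    ext x
    rw [hk2, hΦ]; simp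
  have hint : Integrable (fun t => Φ t) (volume : Measure unitInterval) :=
    Φ.continuous.integrable_of_hasCompactSupport (HasCompactSupport.of_compactSpace _)
  have hI : (∫ t, Φ t) ∈ (A : Set C(X, ℂ)) := by
    refine Convex.integral_mem ?_ hA (Eventually.of_forall hmem) hint
    exact (A.toSubmodule.restrictScalars ℝ).convex
  refine ⟨(g - 1) * ∫ t, Φ t, A.mul_mem (A.sub_mem hg A.one_mem) hI, fun x => ?_⟩
  have h1 : (∫ t, Φ t) x = ∫ t, Φ t x :=
    (ContinuousLinearMap.integral_comp_comm (ContinuousMap.evalCLM ℂ x) hint).symm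
  have h2 := Complex.log_eq_integral (z := g x - 1) (by simpa using hs x)
  rw [add_sub_cancel] at h2
  rw [h2, ContinuousMap.mul_apply, h1]
  simp only [ContinuousMap.sub_apply, ContinuousMap.one_apply]
  congr 1
  simp only [hΦ]
  rw [intervalIntegral.integral_of_le zero_le_one, ← integral_Icc_eq_integral_Ioc]
  exact integral_subtype measurableSet_Icc (fun t : ℝ => (1 + t • (g x - 1))⁻¹)

theorem kl_exp {X : Type*} [TopologicalSpace X] [CompactSpace X] (A : Subalgebra ℂ C(X, ℂ))
    (hA : IsClosed (A : Set C(X, ℂ))) (g : C(X, ℂ)) (hg : g ∈ A) :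
    ∃ k ∈ A, ∀ x, k x = Complex.exp (g x) := by
  refine ⟨NormedSpace.exp g, NormedSpace.exp_mem (s := A) hA hg, fun x => ?_⟩
  have h := NormedSpace.map_exp (ContinuousMap.evalAlgHom ℂ ℂ x : C(X, ℂ) →ₐ[ℂ] ℂ)
    (continuous_eval_const x) g
  rw [Complex.exp_eq_exp_ℂ]
  exact h

theorem kl_sqrt_facts (v h : ℂ) (ρ : ℝ) (hρ : 0 < ρ) (hp : 0 < h.re) (hh : h ^ 2 = v ^ 2 + ρ ^ 2) :
    |v.re| ≤ h.re ∧ h.re ≤ |v.re| + ρ ∧ ‖v / (h + ρ)‖ ≤ 1 ∧ (0 ≤ v.re → 0 ≤ (v / (h + ρ)).re) := by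
  have e1 := congrArg Complex.re hh
  have e2 := congrArg Complex.im hh
  simp [pow_two] at e1 e2
  obtain ⟨x, y⟩ := v
  obtain ⟨p, q⟩ := h
  simp at *
  have e3 : p * q = x * y := by linarith
  have e4 : p ^ 2 * q ^ 2 = x ^ 2 * y ^ 2 := by rw [← mul_pow, e3, mul_pow]
  have k1 : x ^ 2 ≤ p ^ 2 := by
    by_contra hc
    push Not at hc
    nlinarith [sq_nonneg q, sq_nonneg y, sq_nonneg p, sq_nonneg x, sq_pos_of_pos hp, sq_pos_of_pos hρ]
  have k2 : p ^ 2 ≤ x ^ 2 + ρ ^ 2 := by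
    by_contra hc
    push Not at hc
    nlinarith [sq_nonneg q, sq_nonneg y, sq_nonneg p, sq_nonneg x, sq_pos_of_pos hp, sq_pos_of_pos hρ]
  have k3 : |x| ≤ p := abs_le_of_sq_le_sq k1 hp.le
  refine ⟨k3, ?_, ?_, ?_⟩
  · apply le_of_sq_le_sq _ (by positivity)
    have := sq_abs x
    nlinarith [mul_nonneg (abs_nonneg x) hρ.le]
  · have hne : (0:ℝ) < ‖(⟨p, q⟩ : ℂ) + ρ‖ := by
      rw [norm_pos_iff]
      intro h0
      have := congrArg Complex.re h0
      simp at this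
      linarith
    rw [div_le_one hne]
    apply le_of_sq_le_sq _ hne.le
    rw [← Complex.normSq_eq_norm_sq, ← Complex.normSq_eq_norm_sq, Complex.normSq_apply,
      Complex.normSq_apply]
    simp
    have : ρ ^ 2 ≥ 0 := by positivity
    -- |v|² ≤ |h|² + ρ²
    have k4 : y ^ 2 ≤ q ^ 2 + ρ ^ 2 := by nlinarith
    nlinarith [mul_pos hp hρ]
  · intro hx
    rw [Complex.div_re]
    have hq : 0 ≤ y * q := by
      have : p * (y * q) = x * y ^ 2 := by linear_combination y * e3
      have h5 : 0 ≤ p * (y * q) := by rw [this]; positivity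
      exact nonneg_of_mul_nonneg_right h5 hp
    have := Complex.normSq_nonneg ((⟨p, q⟩ : ℂ) + ρ)
    simp
    positivity

theorem kl_sqrt {X : Type*} [TopologicalSpace X] [CompactSpace X] (A : Subalgebra ℂ C(X, ℂ))
    (hA : IsClosed (A : Set C(X, ℂ))) (v : C(X, ℂ)) (hv : v ∈ A) (ρ : ℝ) (hρ : 0 < ρ)
    (hs : ∀ x, (v x).re = 0 → |(v x).im| < ρ) :
    ∃ h ∈ A, ∀ x, 0 < (h x).re ∧ h x ^ 2 = v x ^ 2 + ρ ^ 2 := by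
  have hsl : ∀ x, v x ^ 2 + (ρ:ℂ) ^ 2 ∈ Complex.slitPlane := by
    intro x
    rw [Complex.mem_slitPlane_iff]
    by_contra hc
    push Not at hc
    obtain ⟨h1, h2⟩ := hc
    simp [pow_two] at h1 h2
    have h3 : (v x).re = 0 ∨ (v x).im = 0 := by
      have : (v x).re * (v x).im = 0 := by linarith
      exact mul_eq_zero.1 this
    have h4 : (v x).re = 0 := by
      rcases h3 with h3 | h3
      · exact h3
      · rw [h3] at h1
        exfalso
        nlinarith [sq_nonneg (v x).re, sq_pos_of_pos hρ]
    have h5 := hs x h4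
    rw [h4] at h1
    have h6 := sq_abs (v x).im
    have h7 := abs_nonneg (v x).im
    nlinarith
  obtain ⟨l, hl, hl2⟩ := kl_log A hA (v ^ 2 + algebraMap ℂ C(X, ℂ) ((ρ:ℂ) ^ 2))
    (A.add_mem (A.pow_mem hv 2) (A.algebraMap_mem _)) (fun x => by
      simpa using hsl x)
  obtain ⟨h, hh, hh2⟩ := kl_exp A hA ((1/2 : ℂ) • l) (A.smul_mem hl _)
  refine ⟨h, hh, fun x => ?_⟩
  have e : l x = Complex.log (v x ^ 2 + (ρ:ℂ) ^ 2) := by rw [hl2]; simp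
  rw [hh2]
  simp only [ContinuousMap.smul_apply, smul_eq_mul, e]
  constructor
  · rw [Complex.exp_re]
    apply mul_pos (Real.exp_pos _)
    have e2 : (1 / 2 * Complex.log (v x ^ 2 + (ρ:ℂ) ^ 2)).im
        = Complex.arg (v x ^ 2 + (ρ:ℂ) ^ 2) / 2 := by
      rw [show (1/2 : ℂ) = ((1/2 : ℝ) : ℂ) by norm_num, Complex.im_ofReal_mul, Complex.log_im]
      ring
    rw [e2]
    have h1 := Complex.neg_pi_lt_arg (v x ^ 2 + (ρ:ℂ) ^ 2)
    have h2 := (Complex.arg_le_pi (v x ^ 2 + (ρ:ℂ) ^ 2)).lt_of_ne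
      (Complex.slitPlane_arg_ne_pi (hsl x))
    apply Real.cos_pos_of_mem_Ioo
    constructor <;> linarith
  · rw [← Complex.exp_nat_mul]
    rw [show ((2:ℕ):ℂ) * (1 / 2 * Complex.log (v x ^ 2 + (ρ:ℂ) ^ 2))
      = Complex.log (v x ^ 2 + (ρ:ℂ) ^ 2) by push_cast; ring]
    exact Complex.exp_log (Complex.slitPlane_ne_zero (hsl x))

theorem kl_algebra {N : ℕ} (E : Set (EN N)) (hE : IsCompact E) (z : EN N) (hz : z ∈ polyHull E) :
    ∃ A : Subalgebra ℂ C(↥(insert z E), ℂ), IsClosed (A : Set C(↥(insert z E), ℂ)) ∧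
      (∀ φ : EN N →ₗ[ℂ] ℂ, ∃ f ∈ A, ∀ x, f x = φ x) ∧
      ∀ f ∈ A, ∀ C : ℝ, 0 ≤ C → (∀ x : ↥(insert z E), (x : EN N) ∈ E → ‖f x‖ ≤ C) →
        ‖f ⟨z, mem_insert z E⟩‖ ≤ C := by
  have hcpt : CompactSpace ↥(insert z E) := isCompact_iff_compactSpace.1 (hE.insert z)
  let co : Fin N → C(↥(insert z E), ℂ) := fun j => ⟨fun x => (x : EN N) j, by fun_prop⟩
  let S : Subalgebra ℂ C(↥(insert z E), ℂ) := (MvPolynomial.aeval co).range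
  have hco : ∀ (P : MvPolynomial (Fin N) ℂ) (x : ↥(insert z E)),
      (MvPolynomial.aeval co P) x = MvPolynomial.eval (fun j => (x : EN N) j) P := by
    intro P x
    induction P using MvPolynomial.induction_on with
    | C a => simp
    | add p q hp hq => simp [hp, hq]
    | mul_X p j hp => simp [hp, co]
  refine ⟨S.topologicalClosure, S.isClosed_topologicalClosure, ?_, ?_⟩
  · intro φ
    refine ⟨∑ j, φ (EuclideanSpace.single j 1) • co j, ?_, ?_⟩
    · apply Subalgebra.sum_mem
      intro j _
      apply Subalgebra.smul_mem
      apply S.le_topologicalClosure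
      exact ⟨MvPolynomial.X j, by simp⟩
    · intro x
      have h1 : (x : EN N) = ∑ j, (x : EN N) j • EuclideanSpace.single j (1:ℂ) := by
        ext i
        simp [Finset.sum_apply, Pi.single_apply]
      conv_rhs => rw [h1]
      simp [co, mul_comm]
  · intro f hf C hC hfC
    apply le_of_forall_pos_le_add
    intro ε hε
    have hf' : f ∈ closure (S : Set C(↥(insert z E), ℂ)) := hf
    obtain ⟨s, hs, hd⟩ := Metric.mem_closure_iff.1 hf' (ε / 2) (by positivity)
    obtain ⟨P, rfl⟩ := hs
    have hclose : ∀ x, ‖f x - (MvPolynomial.aeval co P) x‖ ≤ ε / 2 := by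
      intro x
      rw [← dist_eq_norm]
      exact (ContinuousMap.dist_apply_le_dist x).trans hd.le
    have h1 : ‖MvPolynomial.eval (fun j => z j) P‖ ≤ C + ε / 2 := by
      refine (hz P).trans ?_
      refine Real.iSup_le (fun w => Real.iSup_le (fun hw => ?_) (by positivity)) (by positivity)
      have h2 := hclose ⟨w, mem_insert_of_mem z hw⟩
      have h3 := hfC ⟨w, mem_insert_of_mem z hw⟩ hw
      rw [hco] at h2
      have h4 := norm_sub_rev (f ⟨w, mem_insert_of_mem z hw⟩) (MvPolynomial.eval (fun j => w j) P)
      have h5 := norm_le_norm_add_norm_sub (f ⟨w, mem_insert_of_mem z hw⟩)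
        (MvPolynomial.eval (fun j => w j) P)
      simp only at h2
      linarith
    have h2 := hclose ⟨z, mem_insert z E⟩
    rw [hco] at h2
    have h5 := norm_le_norm_add_norm_sub' (f ⟨z, mem_insert z E⟩) (MvPolynomial.eval (fun j => z j) P)
    simp only at h2
    linarith

theorem kl_near {N : ℕ} (K : Set (EN N)) (hK : IsCompact K) (p : EN N) (r : EN N → ℝ)
    (hr : Continuous r) (hr1 : ∀ k ∈ K, k ≠ p → r k < 0) (U : Set (EN N)) (hU : IsOpen U)
    (hp : p ∈ U) : ∃ η > 0, ∀ k ∈ K, -η ≤ r k → k ∈ U := by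
  rcases (K \ U).eq_empty_or_nonempty with h | h
  · exact ⟨1, one_pos, fun k hk _ => by
      by_contra hc
      exact (h ▸ (⟨hk, hc⟩ : k ∈ K \ U) : k ∈ (∅ : Set (EN N)))⟩
  · obtain ⟨m, hm, hm2⟩ := (hK.diff hU).exists_isMaxOn h hr.continuousOn
    have hm3 : r m < 0 := hr1 m hm.1 (fun e => hm.2 (e ▸ hp))
    refine ⟨-(r m) / 2, by linarith, fun k hk hk2 => ?_⟩
    by_contra hc
    have : r k ≤ r m := hm2 ⟨hk, hc⟩
    linarith

theorem kl_right {N : ℕ} (K L : Set (EN N)) (hK : IsCompact K)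
    (hL : IsCompact L) (hLc : Convex ℝ L) (p : EN N) (hpL : p ∈ L)
    (φ : EN N →ₗ[ℂ] ℂ) (hp0 : (φ p).re = 0)
    (hφK : ∀ k ∈ K, k ≠ p → (φ k).re < 0) (hφL : ∀ z ∈ L, 0 ≤ (φ z).re)
    (z : EN N) (hz : z ∈ polyHull (K ∪ L)) (hz0 : 0 ≤ (φ z).re) : z ∈ L := by
  by_contra hzL
  obtain ⟨ℓ, s, hs, hsz⟩ := RCLike.geometric_hahn_banach_closed_point (𝕜 := ℂ) hLc hL.isClosed hzL
  simp only [RCLike.re_to_complex] at hs hsz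
  have hφc : Continuous φ := φ.continuous_of_finiteDimensional
  set δ := (ℓ z).re - s with hδ
  have hδ0 : 0 < δ := by linarith
  obtain ⟨B, hB⟩ := hK.exists_bound_of_continuousOn (f := fun k => (ℓ k).re)
    (by fun_prop)
  have hB' : ∀ k ∈ K, (ℓ k).re ≤ B := fun k hk => (le_abs_self _).trans (hB k hk)
  obtain ⟨η0, hη0, hn0⟩ := kl_near K hK p (fun w => (φ w).re) (by fun_prop) hφK
    {w | (ℓ w).re < s + δ / 2} (isOpen_lt (by fun_prop) (by fun_prop))
    (by have := hs p hpL; simp only [mem_setOf_eq]; linarith)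
  set c := (|B - s| + 1) / η0 with hc
  have hc0 : 0 < c := by positivity
  have hcη : c * η0 = |B - s| + 1 := by rw [hc]; field_simp
  set ρ := δ / (4 * c) with hρ
  have hρ0 : 0 < ρ := by positivity
  have hcρ : c * ρ = δ / 4 := by rw [hρ]; field_simp
  obtain ⟨η1, hη1, hn1⟩ := kl_near K hK p (fun w => (φ w).re) (by fun_prop) hφK
    {w | |(φ w - φ p).im| < ρ} (isOpen_lt (by fun_prop) (by fun_prop))
    (by simpa using hρ0)
  set η := min η1 (η0 / 2) with hη
  have hηpos : 0 < η := by positivity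
  have hηa : η ≤ η1 := min_le_left _ _
  have hηb : η ≤ η0 / 2 := min_le_right _ _
  have hcpt : CompactSpace ↥(insert z (K ∪ L)) :=
    isCompact_iff_compactSpace.1 ((hK.union hL).insert z)
  obtain ⟨A, hA, hlin, hmax⟩ := kl_algebra (K ∪ L) (hK.union hL) z hz
  obtain ⟨f, hf, hfe⟩ := hlin φ
  obtain ⟨m, hm, hme⟩ := hlin (ℓ : EN N →ₗ[ℂ] ℂ)
  obtain ⟨v, hv, hve⟩ : ∃ v ∈ A, ∀ x, v x = φ x - φ p + (η : ℂ) :=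
    ⟨f + algebraMap ℂ _ (-φ p + η), A.add_mem hf (A.algebraMap_mem _), fun x => by
      simp [hfe]; ring⟩
  have hvre : ∀ x, (v x).re = (φ x).re + η := fun x => by rw [hve]; simp [hp0]
  obtain ⟨h, hh, hhe⟩ := kl_sqrt A hA v hv ρ hρ0 (by
    intro x hx
    rw [hvre] at hx
    have hk : (x : EN N) ∈ K := by
      rcases x.2 with h1 | h1 | h1
      · rw [h1] at hx; linarith
      · exact h1
      · have := hφL _ h1; linarith
    have := hn1 _ hk (by linarith)
    rw [hve]
    simpa using this)
  obtain ⟨G, hG, hGe⟩ := kl_exp A hA (m - algebraMap ℂ _ (s:ℂ) + (c:ℂ) • (v - h))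
    (A.add_mem (A.sub_mem hm (A.algebraMap_mem _)) (A.smul_mem (A.sub_mem hv hh) _))
  have hGn : ∀ x, ‖G x‖ = Real.exp ((ℓ x).re - s + c * ((v x).re - (h x).re)) := by
    intro x
    rw [hGe, Complex.norm_exp]
    simp [hme]
  have key := hmax G hG (Real.exp (δ / 2)) (Real.exp_pos _).le (by
    intro x hx
    rw [hGn, Real.exp_le_exp]
    obtain ⟨k1, -, -, -⟩ := kl_sqrt_facts (v x) (h x) ρ hρ0 (hhe x).1 (hhe x).2
    have k2 : (v x).re - (h x).re ≤ 0 := by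
      have := le_abs_self (v x).re; linarith
    have k3 : c * ((v x).re - (h x).re) ≤ 0 := mul_nonpos_of_nonneg_of_nonpos hc0.le k2
    rcases hx with hx | hx
    · by_cases hfar : -η0 ≤ (φ x).re
      · have := hn0 _ hx hfar
        simp only [mem_setOf_eq] at this
        linarith
      · push Not at hfar
        have h1 := hvre x
        have h2 := neg_abs_le (v x).re
        have h3 := neg_le_abs (v x).re
        have h4 : (v x).re - (h x).re ≤ - η0 := by linarith
        have h5 := mul_le_mul_of_nonneg_left h4 hc0.le
        have h6 := hB' _ hx
        have h7 := le_abs_self (B - s)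
        linarith
    · have := hs _ hx
      linarith)
  rw [hGn, Real.exp_le_exp] at key
  obtain ⟨-, k1, -, -⟩ := kl_sqrt_facts (v ⟨z, mem_insert z _⟩) (h ⟨z, mem_insert z _⟩) ρ hρ0
    (hhe _).1 (hhe _).2
  have h1 := hvre ⟨z, mem_insert z _⟩
  simp only at h1 key
  rw [abs_of_nonneg (by rw [h1]; linarith)] at k1
  have h2 : -ρ ≤ (v ⟨z, mem_insert z _⟩).re - (h ⟨z, mem_insert z _⟩).re := by linarith
  have h3 := mul_le_mul_of_nonneg_left h2 hc0.le
  linarith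

theorem kl_left {N : ℕ} (K L : Set (EN N)) (hK : IsCompact K) (hKc : Convex ℝ K)
    (hL : IsCompact L) (p : EN N)
    (φ : EN N →ₗ[ℂ] ℂ) (hp0 : (φ p).re = 0)
    (hφK : ∀ k ∈ K, k ≠ p → (φ k).re < 0) (hφL : ∀ z ∈ L, 0 ≤ (φ z).re)
    (z : EN N) (hz : z ∈ polyHull (K ∪ L)) (hz0 : (φ z).re < 0) : z ∈ K := by
  by_contra hzK
  obtain ⟨ℓ, s, hs, hsz⟩ := RCLike.geometric_hahn_banach_closed_point (𝕜 := ℂ) hKc hK.isClosed hzK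
  simp only [RCLike.re_to_complex] at hs hsz
  have hφc : Continuous φ := φ.continuous_of_finiteDimensional
  set δ := (ℓ z).re - s with hδ
  have hδ0 : 0 < δ := by linarith
  obtain ⟨B, hB⟩ := hL.exists_bound_of_continuousOn (f := fun k => (ℓ k).re)
    (by fun_prop)
  have hB' : ∀ k ∈ L, (ℓ k).re ≤ B := fun k hk => (le_abs_self _).trans (hB k hk)
  set M := |B - s| + 1 with hM
  have hM0 : 0 < M := by positivity
  set α := -(φ z).re / 2 with hα
  have hα0 : 0 < α := by simp only [hα]; linarith
  -- choose `ρ` with `ρ ≤ α` and `2 ρ / α ≤ δ / (2 M)`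
  set ρ := min α (δ * α / (4 * M)) with hρ
  have hρ0 : 0 < ρ := by positivity
  have hρa : ρ ≤ α := min_le_left _ _
  have hρb : M * (2 * ρ / α) ≤ δ / 2 := by
    have h1 : ρ ≤ δ * α / (4 * M) := min_le_right _ _
    rw [le_div_iff₀ (by positivity)] at h1
    rw [← mul_div_assoc, div_le_iff₀ hα0]
    linarith
  obtain ⟨η1, hη1, hn1⟩ := kl_near K hK p (fun w => (φ w).re) (by fun_prop) hφK
    {w | |(φ w - φ p).im| < ρ} (isOpen_lt (by fun_prop) (by fun_prop))
    (by simpa using hρ0)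
  set η := min η1 α with hη
  have hηpos : 0 < η := by positivity
  have hηa : η ≤ η1 := min_le_left _ _
  have hηb : η ≤ α := min_le_right _ _
  have hcpt : CompactSpace ↥(insert z (K ∪ L)) :=
    isCompact_iff_compactSpace.1 ((hK.union hL).insert z)
  obtain ⟨A, hA, hlin, hmax⟩ := kl_algebra (K ∪ L) (hK.union hL) z hz
  obtain ⟨f, hf, hfe⟩ := hlin φ
  obtain ⟨m, hm, hme⟩ := hlin (ℓ : EN N →ₗ[ℂ] ℂ)
  obtain ⟨v, hv, hve⟩ : ∃ v ∈ A, ∀ x, v x = φ x - φ p + (η : ℂ) :=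
    ⟨f + algebraMap ℂ _ (-φ p + η), A.add_mem hf (A.algebraMap_mem _), fun x => by
      simp [hfe]; ring⟩
  have hvre : ∀ x, (v x).re = (φ x).re + η := fun x => by rw [hve]; simp [hp0]
  obtain ⟨h, hh, hhe⟩ := kl_sqrt A hA v hv ρ hρ0 (by
    intro x hx
    rw [hvre] at hx
    have hk : (x : EN N) ∈ K := by
      rcases x.2 with h1 | h1 | h1
      · rw [h1] at hx; linarith
      · exact h1
      · have := hφL _ h1; linarith
    have := hn1 _ hk (by linarith)
    rw [hve]
    simpa using this)
  obtain ⟨i, hi, hie⟩ := kl_inv A hA (h + algebraMap ℂ _ (ρ:ℂ))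
    (A.add_mem hh (A.algebraMap_mem _)) (by
      intro x
      left
      have := (hhe x).1
      simp
      linarith)
  have hie' : ∀ x, v x * i x = v x / (h x + ρ) := fun x => by
    rw [hie, div_eq_mul_inv]; simp
  obtain ⟨G, hG, hGe⟩ := kl_exp A hA (m - algebraMap ℂ _ (s:ℂ) + (M:ℂ) • (- (v * i) - 1))
    (A.add_mem (A.sub_mem hm (A.algebraMap_mem _)) (A.smul_mem (A.sub_mem
      (A.neg_mem (A.mul_mem hv hi)) A.one_mem) _))
  have hGn : ∀ x, ‖G x‖ = Real.exp ((ℓ x).re - s + M * (-(v x / (h x + ρ)).re - 1)) := by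
    intro x
    rw [hGe, Complex.norm_exp, ← hie']
    simp [hme]
  have key := hmax G hG 1 zero_le_one (by
    intro x hx
    rw [hGn, Real.exp_le_one_iff]
    obtain ⟨-, -, k1, k2⟩ := kl_sqrt_facts (v x) (h x) ρ hρ0 (hhe x).1 (hhe x).2
    rcases hx with hx | hx
    · have h1 := hs _ hx
      have h2 := (abs_le.1 ((Complex.abs_re_le_norm (v x / (h x + ρ))).trans k1)).1
      have h3 : M * (-(v x / (h x + ρ)).re - 1) ≤ 0 :=
        mul_nonpos_of_nonneg_of_nonpos hM0.le (by linarith)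
      linarith
    · have h1 := hB' _ hx
      have h2 := k2 (by rw [hvre]; have := hφL _ hx; linarith)
      have h3 : M * (-(v x / (h x + ρ)).re - 1) ≤ M * (-1) :=
        mul_le_mul_of_nonneg_left (by linarith) hM0.le
      have h7 := le_abs_self (B - s)
      linarith)
  rw [hGn, Real.exp_le_one_iff] at key
  obtain ⟨k0, -, -, -⟩ := kl_sqrt_facts (v ⟨z, mem_insert z _⟩) (h ⟨z, mem_insert z _⟩) ρ hρ0
    (hhe _).1 (hhe _).2
  have hsq := (hhe ⟨z, mem_insert z _⟩).2
  have h1 := hvre ⟨z, mem_insert z _⟩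
  simp only at h1 key
  generalize v ⟨z, mem_insert z _⟩ = V at *
  generalize h ⟨z, mem_insert z _⟩ = H at *
  have hV : V.re ≤ -α := by rw [h1]; linarith
  have hH : α ≤ H.re := by have := neg_le_abs V.re; linarith
  have n1 : α ≤ ‖H + ρ‖ := by
    have := Complex.re_le_norm (H + ρ)
    simp at this
    linarith
  have n2 : α ≤ ‖H - V‖ := by
    have := Complex.re_le_norm (H - V)
    simp at this
    linarith
  have n3 : ‖H + V‖ * ‖H - V‖ = ρ ^ 2 := by
    rw [← norm_mul, show (H + V) * (H - V) = (ρ:ℂ) ^ 2 by linear_combination hsq]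
    simp
  have n4 : ‖H + V‖ ≤ ρ := by
    have h5 : ‖H + V‖ * α ≤ ρ * α := by
      have := mul_le_mul_of_nonneg_left n2 (norm_nonneg (H + V))
      nlinarith
    exact le_of_mul_le_mul_right h5 hα0
  have hne : H + ρ ≠ 0 := by
    rw [← norm_pos_iff]; linarith
  have n5 : ‖V / (H + ρ) + 1‖ ≤ 2 * ρ / α := by
    rw [show V / (H + ρ) + 1 = (H + V + ρ) / (H + ρ) by field_simp; ring, norm_div]
    have h6 : ‖H + V + ρ‖ ≤ 2 * ρ := by
      have := norm_add_le (H + V) (ρ:ℂ)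
      rw [Complex.norm_real, Real.norm_of_nonneg hρ0.le] at this
      linarith
    gcongr
  have n6 := (Complex.re_le_norm (V / (H + ρ) + 1)).trans n5
  rw [Complex.add_re, Complex.one_re] at n6
  have n7 : M * (-(2 * ρ / α)) ≤ M * (-(V / (H + ρ)).re - 1) :=
    mul_le_mul_of_nonneg_left (by linarith) hM0.le
  linarith

theorem kl_subset_hull {N : ℕ} (E : Set (EN N)) (hE : IsCompact E) : E ⊆ polyHull E := by
  intro w hw P
  have hc : Continuous fun w : EN N => MvPolynomial.eval (fun j => w j) P :=
    (MvPolynomial.continuous_eval P).comp (by fun_prop)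
  obtain ⟨C, hC⟩ := hE.exists_bound_of_continuousOn hc.continuousOn
  have hC0 : 0 ≤ C := (norm_nonneg _).trans (hC w hw)
  have hb : BddAbove (range fun w : EN N => ⨆ _ : w ∈ E, ‖MvPolynomial.eval (fun j => w j) P‖) := by
    refine ⟨C, ?_⟩
    rintro _ ⟨u, rfl⟩
    exact Real.iSup_le (fun hu => hC u hu) hC0
  refine le_ciSup_of_le hb w ?_
  rw [ciSup_pos hw]

/-- **Kallin's lemma.** Let `K, L` be compact convex subsets of `ℂ^N` meeting at exactly one
point. If a complex-linear functional `φ` satisfies `Re φ ≤ 0` on `K`, `Re φ ≥ 0` on `L`,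
and `{Re φ = 0}` meets `K` in a single point, then `K ∪ L` is polynomially convex. -/
theorem kallin_lemma {N : ℕ} (K L : Set (EN N)) (hK : IsCompact K) (hKc : Convex ℝ K)
    (hL : IsCompact L) (hLc : Convex ℝ L) (hKL : ∃ p, K ∩ L = {p})
    (φ : EN N →ₗ[ℂ] ℂ)
    (hφK : ∀ z ∈ K, (φ z).re ≤ 0) (hφL : ∀ z ∈ L, 0 ≤ (φ z).re)
    (hker : ∃ q, {z ∈ K | (φ z).re = 0} = {q}) :
    PolynomiallyConvex (K ∪ L) := by
  obtain ⟨p, hp⟩ := hKL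
  obtain ⟨q, hq⟩ := hker
  have hpKL : p ∈ K ∩ L := by rw [hp]; rfl
  have hp0 : (φ p).re = 0 := le_antisymm (hφK p hpKL.1) (hφL p hpKL.2)
  have hpq : p = q := by
    have : p ∈ {z ∈ K | (φ z).re = 0} := ⟨hpKL.1, hp0⟩
    rw [hq] at this
    exact this
  have hK' : ∀ k ∈ K, k ≠ p → (φ k).re < 0 := by
    intro k hk hkp
    refine lt_of_le_of_ne (hφK k hk) (fun h0 => hkp ?_)
    have : k ∈ {z ∈ K | (φ z).re = 0} := ⟨hk, h0⟩
    rw [hq] at this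
    rw [hpq]
    exact this
  refine Subset.antisymm (fun z hz => ?_) (kl_subset_hull _ (hK.union hL))
  rcases le_or_gt 0 (φ z).re with h | h
  · exact Or.inr (kl_right K L hK hL hLc p hpKL.2 φ hp0 hK' hφL z hz h)
  · exact Or.inl (kl_left K L hK hKc hL p φ hp0 hK' hφL z hz h)
end
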